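/- arXiv:1202.5605 — 2 statements merged into one kernel-verified Lean document; each statement's English description precedes it below -/
import Mathlib

section
/- Let R be a commutative noetherian local ring and M a finitely generated R-module of finite projective dimension that is free when localized at every nonmaximal prime. Then res M = PD_0^n(R), where n = pd_R M. -/
universe u

open CategoryTheory

namespace ResolvPaper

variable (R : Type u) [CommRing R]

/-- `IsSES f g` means `0 → A → B → C → 0` is a short exact sequence. -/
def IsSES {R : Type u} [CommRing R] {A B C : Type u} [AddCommGroup A] [Module R A]
    [AddCommGroup B] [Module R B] [AddCommGroup C] [Module R C]
    (f : A →ₗ[R] B) (g : B →ₗ[R] C) : Prop :=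
  Function.Injective f ∧ Function.Surjective g ∧ LinearMap.range f = LinearMap.ker g

/-- A resolving subcategory of `mod R`, viewed as a set of bundled modules
closed under isomorphism, containing the finitely generated projective modules, and closed
under direct summands, extensions and syzygies. -/
structure IsResolving (𝒳 : Set (ModuleCat.{u} R)) : Prop where
  fg : ∀ M ∈ 𝒳, Module.Finite R M
  iso_closed : ∀ M N : ModuleCat.{u} R, Nonempty (M ≃ₗ[R] N) → M ∈ 𝒳 → N ∈ 𝒳
  proj_mem : ∀ M : ModuleCat.{u} R, Module.Finite R M → Module.Projective R M → M ∈ 𝒳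
  summand_closed : ∀ M N : ModuleCat.{u} R, ModuleCat.of R (↥M × ↥N) ∈ 𝒳 → M ∈ 𝒳
  ext_closed : ∀ (A B C : ModuleCat.{u} R) (f : A →ₗ[R] B) (g : B →ₗ[R] C),
    IsSES f g → A ∈ 𝒳 → C ∈ 𝒳 → B ∈ 𝒳
  syzygy_closed : ∀ (K P M : ModuleCat.{u} R) (f : K →ₗ[R] P) (g : P →ₗ[R] M),
    IsSES f g → Module.Finite R K → Module.Finite R P → Module.Projective R P →
    M ∈ 𝒳 → K ∈ 𝒳

/-- The resolving closure: the smallest resolving subcategory containing `S`. -/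
def resClosure (S : Set (ModuleCat.{u} R)) : Set (ModuleCat.{u} R) :=
  ⋂₀ {𝒳 | IsResolving R 𝒳 ∧ S ⊆ 𝒳}

/-- An extension-closed subcategory of `mod R`: closed under isomorphism,
direct summands and extensions. -/
def IsExtClosed (𝒳 : Set (ModuleCat.{u} R)) : Prop :=
  (∀ M N : ModuleCat.{u} R, Nonempty (M ≃ₗ[R] N) → M ∈ 𝒳 → N ∈ 𝒳) ∧
  (∀ M N : ModuleCat.{u} R, ModuleCat.of R (↥M × ↥N) ∈ 𝒳 → M ∈ 𝒳) ∧
  (∀ (A B C : ModuleCat.{u} R) (f : A →ₗ[R] B) (g : B →ₗ[R] C),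
    IsSES f g → A ∈ 𝒳 → C ∈ 𝒳 → B ∈ 𝒳)

/-- The extension closure of a set of modules. -/
def extClosure (S : Set (ModuleCat.{u} R)) : Set (ModuleCat.{u} R) :=
  ⋂₀ {𝒳 | IsExtClosed R 𝒳 ∧ S ⊆ 𝒳}

/-- `add R`: direct summands of finite free modules. -/
def addR : Set (ModuleCat.{u} R) :=
  {M | ∃ (n : ℕ) (N : ModuleCat.{u} R), Nonempty ((↥M × ↥N) ≃ₗ[R] (Fin n → R))}

/-- `pdLE n M` : the projective dimension of `M` is at most `n`. -/
def pdLE : ℕ → ModuleCat.{u} R → Prop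
  | 0, M => Module.Projective R M
  | n+1, M => ∃ (K P : ModuleCat.{u} R) (f : K →ₗ[R] P) (g : P →ₗ[R] M),
      Module.Finite R P ∧ Module.Projective R P ∧ IsSES f g ∧ pdLE n K

/-- The projective dimension, an element of `WithBot ℕ∞`; the zero module
has projective dimension `⊥ = -∞`. -/
noncomputable def pdim (M : ModuleCat.{u} R) : WithBot ℕ∞ :=
  sInf {x : WithBot ℕ∞ | (x = ⊥ ∧ Subsingleton M) ∨ ∃ n : ℕ, x = (n : ℕ∞) ∧ pdLE R n M}

/-- The depth of `M` with respect to the ideal `I`: the supremum of lengths of weakly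
`M`-regular sequences contained in `I`.  The zero module has depth `∞`. -/
noncomputable def depthE (I : Ideal R) (M : Type u) [AddCommGroup M] [Module R M] : ℕ∞ :=
  sSup {x : ℕ∞ | ∃ rs : List R, (∀ r ∈ rs, r ∈ I) ∧
    RingTheory.Sequence.IsWeaklyRegular M rs ∧ x = rs.length}

/-- The grade of an ideal: the length of a maximal `R`-regular sequence in `I`. -/
noncomputable def gradeE (I : Ideal R) : ℕ∞ := depthE R I R

/-- A grade consistent function on `Spec R`. -/
def GradeConsistent (f : PrimeSpectrum R → ℕ) : Prop :=
  (∀ p : PrimeSpectrum R, (f p : ℕ∞) ≤ gradeE R p.asIdeal) ∧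
  (∀ p q : PrimeSpectrum R, p.asIdeal ≤ q.asIdeal → f p ≤ f q)

/-- The localization of a module at a prime, as a module over the local ring `R_p`. -/
noncomputable abbrev localizeM (p : PrimeSpectrum R) (M : ModuleCat.{u} R) :
    ModuleCat.{u} (Localization.AtPrime p.asIdeal) :=
  ModuleCat.of (Localization.AtPrime p.asIdeal) (LocalizedModule p.asIdeal.primeCompl M)

/-- `pd_{R_p} M_p`. -/
noncomputable def localPdim (p : PrimeSpectrum R) (M : ModuleCat.{u} R) : WithBot ℕ∞ :=
  pdim (Localization.AtPrime p.asIdeal) (localizeM R p M)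

/-- `depth_{R_p} M_p`. -/
noncomputable def localDepth (p : PrimeSpectrum R) (M : ModuleCat.{u} R) : ℕ∞ :=
  depthE (Localization.AtPrime p.asIdeal)
    (IsLocalRing.maximalIdeal (Localization.AtPrime p.asIdeal))
    (LocalizedModule p.asIdeal.primeCompl M)

/-- The height of a prime ideal. -/
noncomputable def heightE (p : PrimeSpectrum R) : ℕ∞ := Order.height p

/-- `PD(R)` : finitely generated modules of finite projective dimension. -/
def PDcat : Set (ModuleCat.{u} R) :=
  {M | Module.Finite R M ∧ ∃ n : ℕ, pdLE R n M}

/-- `MCM(R)` : maximal Cohen-Macaulay modules. -/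
def MCMcat : Set (ModuleCat.{u} R) :=
  {M | Module.Finite R M ∧ ∀ p : PrimeSpectrum R, heightE R p ≤ localDepth R p M}

/-- The nonfree locus of a module. -/
def NF (M : ModuleCat.{u} R) : Set (PrimeSpectrum R) :=
  {p | ¬ Module.Free (Localization.AtPrime p.asIdeal) (LocalizedModule p.asIdeal.primeCompl M)}

/-- The infinite projective dimension locus of a module. -/
def IPD (M : ModuleCat.{u} R) : Set (PrimeSpectrum R) :=
  {p | localPdim R p M = (⊤ : WithBot ℕ∞)}

/-- The infinite projective dimension locus of a collection of modules. -/
def IPDcat (𝒳 : Set (ModuleCat.{u} R)) : Set (PrimeSpectrum R) :=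
  ⋃ M ∈ 𝒳, IPD R M

/-- The modules in `mod R` whose infinite projective dimension locus lies in `W`. -/
def IPDinv (W : Set (PrimeSpectrum R)) : Set (ModuleCat.{u} R) :=
  {M | Module.Finite R M ∧ IPD R M ⊆ W}

/-- A specialization closed subset of `Spec R`. -/
def SpecClosed (W : Set (PrimeSpectrum R)) : Prop :=
  ∀ p ∈ W, ∀ q : PrimeSpectrum R, p.asIdeal ≤ q.asIdeal → q ∈ W

/-- Membership in `add 𝒳_p`: direct summands of localizations of finite direct sums
of members of `𝒳`. -/
def memAddLocal (𝒳 : Set (ModuleCat.{u} R)) (p : PrimeSpectrum R)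
    (N : ModuleCat.{u} (Localization.AtPrime p.asIdeal)) : Prop :=
  ∃ (n : ℕ) (X : Fin n → ModuleCat.{u} R), (∀ i, X i ∈ 𝒳) ∧
    ∃ (N' : ModuleCat.{u} (Localization.AtPrime p.asIdeal)),
      Nonempty ((↥N × ↥N') ≃ₗ[Localization.AtPrime p.asIdeal]
        ((i : Fin n) → LocalizedModule p.asIdeal.primeCompl (X i)))

/-- `K` is an `n`-th syzygy of `M` computed from a minimal free resolution over the
local ring `S`. -/
def IsMinSyz (S : Type u) [CommRing S] [IsLocalRing S] :
    ℕ → ModuleCat.{u} S → ModuleCat.{u} S → Prop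
  | 0, M, K => Nonempty (K ≃ₗ[S] M)
  | n+1, M, K => ∃ (F : ModuleCat.{u} S) (g : F →ₗ[S] M) (K' : ModuleCat.{u} S)
      (i : K' →ₗ[S] F),
      Module.Finite S F ∧ Module.Free S F ∧ Function.Surjective g ∧
      (LinearMap.ker g ≤ (IsLocalRing.maximalIdeal S) • (⊤ : Submodule S F)) ∧
      Function.Injective i ∧ LinearMap.range i = LinearMap.ker g ∧
      IsMinSyz S n K' K

/-- `K` is an `n`-th syzygy of `M` in some projective resolution (over any ring). -/
def IsSyz : ℕ → ModuleCat.{u} R → ModuleCat.{u} R → Prop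
  | 0, M, K => Nonempty (K ≃ₗ[R] M)
  | n+1, M, K => ∃ (F : ModuleCat.{u} R) (g : F →ₗ[R] M) (K' : ModuleCat.{u} R)
      (i : K' →ₗ[R] F),
      Module.Finite R F ∧ Module.Projective R F ∧ Function.Surjective g ∧
      Function.Injective i ∧ LinearMap.range i = LinearMap.ker g ∧
      IsSyz n K' K

/-- `T` is (isomorphic to) the Auslander transpose of `M`, computed from a minimal
free presentation over the local ring `S`. -/
def IsTranspose (S : Type u) [CommRing S] [IsLocalRing S] (M T : ModuleCat.{u} S) : Prop :=
  ∃ (F1 F0 : ModuleCat.{u} S) (d : F1 →ₗ[S] F0) (e : F0 →ₗ[S] M),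
    Module.Finite S F0 ∧ Module.Free S F0 ∧ Module.Finite S F1 ∧ Module.Free S F1 ∧
    Function.Surjective e ∧ LinearMap.range d = LinearMap.ker e ∧
    LinearMap.ker e ≤ (IsLocalRing.maximalIdeal S) • (⊤ : Submodule S F0) ∧
    LinearMap.ker d ≤ (IsLocalRing.maximalIdeal S) • (⊤ : Submodule S F1) ∧
    Nonempty (T ≃ₗ[S] ((Module.Dual S F1) ⧸ LinearMap.range d.dualMap))

/-- `T` is (isomorphic to) `Tr Ω^n M` over the local ring `S`. -/
def IsTrOmega (S : Type u) [CommRing S] [IsLocalRing S] (n : ℕ) (M T : ModuleCat.{u} S) :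
    Prop :=
  ∃ K : ModuleCat.{u} S, IsMinSyz S n M K ∧ IsTranspose S K T

/-- Resolving subcategory `𝒳` is dominant on `W ⊆ Spec R`. -/
def DominantOn (𝒳 : Set (ModuleCat.{u} R)) (W : Set (PrimeSpectrum R)) : Prop :=
  ∀ p ∈ W, ∃ (n : ℕ) (K : ModuleCat.{u} (Localization.AtPrime p.asIdeal)),
    IsMinSyz (Localization.AtPrime p.asIdeal) n
      (ModuleCat.of (Localization.AtPrime p.asIdeal)
        (IsLocalRing.ResidueField (Localization.AtPrime p.asIdeal))) K ∧
    memAddLocal R 𝒳 p K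

/-- Dominant resolving subcategory. -/
def Dominant (𝒳 : Set (ModuleCat.{u} R)) : Prop := DominantOn R 𝒳 Set.univ

/-- A (noetherian) local ring is Cohen-Macaulay if its depth equals its Krull dimension. -/
def IsCMLocalRing (S : Type u) [CommRing S] [IsLocalRing S] : Prop :=
  IsNoetherianRing S ∧
    ((depthE S (IsLocalRing.maximalIdeal S) S : WithBot ℕ∞) = ringKrullDim S)

/-- A regular local ring: a noetherian local ring whose maximal ideal is generated by
`dim S` elements. -/
def IsRegLocalRing (S : Type u) [CommRing S] [IsLocalRing S] : Prop :=
  IsNoetherianRing S ∧ ∃ s : Finset S,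
    Ideal.span (s : Set S) = IsLocalRing.maximalIdeal S ∧
    ringKrullDim S = (s.card : WithBot ℕ∞)

/-- The singular locus of `R`. -/
def SingLocus : Set (PrimeSpectrum R) :=
  {p | ¬ IsRegLocalRing (Localization.AtPrime p.asIdeal)}

/-- A hypersurface local ring: the completion is a quotient of a regular local ring by
one element. -/
def IsHypersurfaceLocalRing (S : Type u) [CommRing S] [IsLocalRing S] : Prop :=
  ∃ (T : Type u) (_ : CommRing T) (_ : IsLocalRing T) (f : T),
    IsRegLocalRing T ∧
    Nonempty ((AdicCompletion (IsLocalRing.maximalIdeal S) S) ≃+* (T ⧸ Ideal.span {f}))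

/-- A complete intersection local ring: the completion is a quotient of a regular local
ring by a regular sequence. -/
def IsCompleteIntersectionLocalRing (S : Type u) [CommRing S] [IsLocalRing S] : Prop :=
  ∃ (T : Type u) (_ : CommRing T) (_ : IsLocalRing T) (rs : List T),
    IsRegLocalRing T ∧ RingTheory.Sequence.IsRegular T rs ∧
    Nonempty ((AdicCompletion (IsLocalRing.maximalIdeal S) S) ≃+*
      (T ⧸ Ideal.ofList rs))

/-- The subquotient `A / (A ⊓ B)` of two submodules, used for homology. -/
def subquot {S M : Type u} [CommRing S] [AddCommGroup M] [Module S M]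
    (A B : Submodule S M) : Type u :=
  A ⧸ (B.comap A.subtype)

noncomputable instance {S M : Type u} [CommRing S] [AddCommGroup M] [Module S M]
    (A B : Submodule S M) : AddCommGroup (subquot A B) :=
  inferInstanceAs (AddCommGroup (A ⧸ (B.comap A.subtype)))

noncomputable instance {S M : Type u} [CommRing S] [AddCommGroup M] [Module S M]
    (A B : Submodule S M) : Module S (subquot A B) :=
  inferInstanceAs (Module S (A ⧸ (B.comap A.subtype)))

/-- `E` is (isomorphic to) `Ext^{j+1}_S(M, S)`, computed from a finite free resolution. -/
def IsExtPos (S : Type u) [CommRing S] (j : ℕ) (M E : ModuleCat.{u} S) : Prop :=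
  ∃ (F : ℕ → ModuleCat.{u} S) (d : ∀ i : ℕ, (F (i+1) : Type u) →ₗ[S] F i)
    (e : (F 0 : Type u) →ₗ[S] M),
    (∀ i, Module.Finite S (F i)) ∧ (∀ i, Module.Free S (F i)) ∧
    Function.Surjective e ∧ LinearMap.range (d 0) = LinearMap.ker e ∧
    (∀ i, LinearMap.range (d (i+1)) = LinearMap.ker (d i)) ∧
    Nonempty (E ≃ₗ[S]
      subquot (LinearMap.ker ((d (j+1)).dualMap)) (LinearMap.range ((d j).dualMap)))

/-- `T` is (isomorphic to) `Tor_n^S(M, N)`, computed from a projective resolution of `M`. -/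
def IsTor (S : Type u) [CommRing S] (n : ℕ) (M N T : ModuleCat.{u} S) : Prop :=
  ∃ (F : ℕ → ModuleCat.{u} S) (d : ∀ i : ℕ, (F (i+1) : Type u) →ₗ[S] F i)
    (e : (F 0 : Type u) →ₗ[S] M),
    (∀ i, Module.Projective S (F i)) ∧
    Function.Surjective e ∧ LinearMap.range (d 0) = LinearMap.ker e ∧
    (∀ i, LinearMap.range (d (i+1)) = LinearMap.ker (d i)) ∧
    (match n with
      | 0 => Nonempty (T ≃ₗ[S] TensorProduct S M N)
      | (j+1) => Nonempty (T ≃ₗ[S]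
          subquot (LinearMap.ker (LinearMap.rTensor (↥N) (d j)))
            (LinearMap.range (LinearMap.rTensor (↥N) (d (j+1))))))

/-- `idLE n M` : the injective dimension of `M` is at most `n`. -/
def idLE (S : Type u) [CommRing S] : ℕ → ModuleCat.{u} S → Prop
  | 0, M => Module.Injective S M
  | n+1, M => ∃ (I C : ModuleCat.{u} S) (f : M →ₗ[S] I) (g : I →ₗ[S] C),
      IsSES f g ∧ Module.Injective S I ∧ idLE S n C

/-- `PD_0^n(R)` over a local ring: modules of projective dimension at most `n` that are
free on the punctured spectrum. -/
def PD0n [IsLocalRing R] (n : ℕ) : Set (ModuleCat.{u} R) :=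
  {M | Module.Finite R M ∧ pdLE R n M ∧
    ∀ p : PrimeSpectrum R, p.asIdeal ≠ IsLocalRing.maximalIdeal R →
      Module.Free (Localization.AtPrime p.asIdeal) (LocalizedModule p.asIdeal.primeCompl M)}

/-- `PD_0(R)` over a local ring: modules of finite projective dimension that are
free on the punctured spectrum. -/
def PD0 [IsLocalRing R] : Set (ModuleCat.{u} R) :=
  {M | Module.Finite R M ∧ (∃ n : ℕ, pdLE R n M) ∧
    ∀ p : PrimeSpectrum R, p.asIdeal ≠ IsLocalRing.maximalIdeal R →
      Module.Free (Localization.AtPrime p.asIdeal) (LocalizedModule p.asIdeal.primeCompl M)}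

/-- The residue field of a local ring, as a bundled module. -/
noncomputable abbrev residueMod (S : Type u) [CommRing S] [IsLocalRing S] : ModuleCat.{u} S :=
  ModuleCat.of S (IsLocalRing.ResidueField S)


section LFsec
set_option linter.unusedSectionVars false

/-- Elementary form of being locally free on the punctured spectrum: for each `x` in the maximal
ideal some power of `x` acts through a finite free module. -/
def LF (R : Type u) [CommRing R] [IsLocalRing R] (N : Type u) [AddCommGroup N] [Module R N] : Prop :=
  ∀ x ∈ IsLocalRing.maximalIdeal R, ∃ (e k : ℕ) (f : N →ₗ[R] (Fin k → R))
    (g : (Fin k → R) →ₗ[R] N), ∀ z, g (f z) = x ^ e • z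

variable {R : Type u} [CommRing R] [IsLocalRing R]
variable {A B C : Type u} [AddCommGroup A] [Module R A]
    [AddCommGroup B] [Module R B] [AddCommGroup C] [Module R C]

lemma LF.retract (i : A →ₗ[R] B) (p : B →ₗ[R] A) (h : ∀ a, p (i a) = a) (hB : LF R B) :
    LF R A := by
  intro x hx
  obtain ⟨e, k, f, g, H⟩ := hB x hx
  refine ⟨e, k, f ∘ₗ i, p ∘ₗ g, fun z => ?_⟩
  simp [H, h]

lemma exists_retract_free (P : Type u) [AddCommGroup P] [Module R P] [Module.Finite R P]
    [Module.Projective R P] : ∃ (k : ℕ) (i : P →ₗ[R] (Fin k → R)) (p : (Fin k → R) →ₗ[R] P),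
      ∀ a, p (i a) = a := by
  obtain ⟨k, p, hp⟩ := Module.Finite.exists_fin' R P
  obtain ⟨i, hi⟩ := Module.projective_lifting_property p LinearMap.id hp
  exact ⟨k, i, p, fun a => LinearMap.congr_fun hi a⟩

lemma factor_fin (P : Type u) [AddCommGroup P] [Module R P] [Module.Finite R P]
    [Module.Projective R P] (x : R) (e : ℕ) (f : A →ₗ[R] P) (g : P →ₗ[R] A)
    (H : ∀ z, g (f z) = x ^ e • z) :  ∃ (e k : ℕ) (f : A →ₗ[R] (Fin k → R))
    (g : (Fin k → R) →ₗ[R] A), ∀ z, g (f z) = x ^ e • z := by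
  obtain ⟨k, i, p, hip⟩ := exists_retract_free (R := R) P
  exact ⟨e, k, i ∘ₗ f, g ∘ₗ p, fun z => by simp [hip, H]⟩

lemma LF.of_projective [Module.Finite R A] [Module.Projective R A] : LF R A :=
  fun x _ => factor_fin A x 0 LinearMap.id LinearMap.id (by simp)

lemma LF.lift (hC : LF R C) (p : B →ₗ[R] C) (hp : Function.Surjective p) (x : R)
    (hx : x ∈ IsLocalRing.maximalIdeal R) :
    ∃ (e : ℕ) (s : C →ₗ[R] B), ∀ c, p (s c) = x ^ e • c := by
  obtain ⟨e, k, f, g, H⟩ := hC x hx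
  obtain ⟨s, hs⟩ := Module.projective_lifting_property p g hp
  exact ⟨e, s ∘ₗ f, fun c => by
    rw [← H, ← hs]; rfl⟩

lemma exists_factor_ker {f : A →ₗ[R] B} {g : B →ₗ[R] C} (h : IsSES f g) {D : Type u}
    [AddCommGroup D] [Module R D] (t : D →ₗ[R] B) (ht : ∀ d, g (t d) = 0) :
    ∃ t' : D →ₗ[R] A, ∀ d, f (t' d) = t d := by
  let e := LinearEquiv.ofInjective f h.1
  have hm : ∀ d, t d ∈ LinearMap.range f := fun d => by
    rw [h.2.2]; exact ht d
  refine ⟨e.symm.toLinearMap ∘ₗ t.codRestrict _ hm, fun d => ?_⟩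
  simp [e]

lemma exists_factor_surj {g : B →ₗ[R] C} (h : Function.Surjective g) {D : Type u}
    [AddCommGroup D] [Module R D] (t : B →ₗ[R] D) (ht : ∀ b, g b = 0 → t b = 0) :
    ∃ t' : C →ₗ[R] D, ∀ b, t' (g b) = t b := by
  let e := g.quotKerEquivOfSurjective h
  refine ⟨(LinearMap.ker g).liftQ t (fun b hb => ht b hb) ∘ₗ e.symm.toLinearMap, fun b => ?_⟩
  have : e.symm (g b) = (LinearMap.ker g).mkQ b := by
    rw [LinearEquiv.symm_apply_eq]; rfl
  simp only [LinearMap.comp_apply, LinearEquiv.coe_coe, this]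
  rfl

lemma IsSES.comp_zero {f : A →ₗ[R] B} {g : B →ₗ[R] C} (h : IsSES f g) (a : A) : g (f a) = 0 := by
  have : f a ∈ LinearMap.ker g := h.2.2 ▸ ⟨a, rfl⟩
  exact this

lemma IsSES.exists_of {f : A →ₗ[R] B} {g : B →ₗ[R] C} (h : IsSES f g) (b : B) (hb : g b = 0) :
    ∃ a, f a = b := by
  have : b ∈ LinearMap.range f := h.2.2 ▸ hb
  exact this

/-- build an `IsSES`. -/
lemma IsSES.mk' {f : A →ₗ[R] B} {g : B →ₗ[R] C} (h1 : ∀ a, f a = 0 → a = 0)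
    (h2 : Function.Surjective g) (h3 : ∀ a, g (f a) = 0) (h4 : ∀ b, g b = 0 → ∃ a, f a = b) :
    IsSES f g := by
  refine ⟨(injective_iff_map_eq_zero f).2 h1, h2, le_antisymm ?_ fun b hb => h4 b hb⟩
  rintro _ ⟨a, rfl⟩
  exact h3 a

lemma LF.ext {f : A →ₗ[R] B} {g : B →ₗ[R] C} (h : IsSES f g) (hA : LF R A) (hC : LF R C) :
    LF R B := by
  intro x hx
  obtain ⟨e, k, p, q, H⟩ := hC x hx
  obtain ⟨s, hs⟩ := Module.projective_lifting_property g q h.2.1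
  obtain ⟨t, ht⟩ := exists_factor_ker h (x ^ e • LinearMap.id - s ∘ₗ p ∘ₗ g) (fun b => by
    have := LinearMap.congr_fun hs (p (g b))
    simp only [LinearMap.comp_apply] at this
    simp [this, H])
  obtain ⟨e', k', p', q', H'⟩ := hA x hx
  refine factor_fin ((Fin k → R) × (Fin k' → R)) x (e' + e)
    (((x ^ e') • p ∘ₗ g).prod (p' ∘ₗ t)) (s.coprod (f ∘ₗ q')) fun z => ?_
  simp [H', ht, pow_add, mul_smul, smul_sub]

lemma LF.ker {f : A →ₗ[R] B} {g : B →ₗ[R] C} (h : IsSES f g) (hB : LF R B) (hC : LF R C) :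
    LF R A := by
  intro x hx
  obtain ⟨e, s, hs⟩ := hC.lift g h.2.1 x hx
  obtain ⟨t, ht⟩ := exists_factor_ker h (x ^ e • LinearMap.id - s ∘ₗ g) (fun b => by simp [hs])
  obtain ⟨e', k', p', q', H'⟩ := hB x hx
  refine ⟨e' + e, k', p' ∘ₗ f, t ∘ₗ q', fun z => h.1 ?_⟩
  simp [H', ht, pow_add, mul_smul, h.comp_zero]

lemma LF.coker {f : A →ₗ[R] B} {g : B →ₗ[R] C} (h : IsSES f g) [Module.Finite R B]
    [Module.Projective R B]
    (H : ∀ x ∈ IsLocalRing.maximalIdeal R, ∃ (e : ℕ) (ρ : B →ₗ[R] A), ∀ a, ρ (f a) = x ^ e • a) :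
    LF R C := by
  intro x hx
  obtain ⟨e, ρ, hρ⟩ := H x hx
  obtain ⟨t, ht⟩ := exists_factor_surj h.2.1 (x ^ e • LinearMap.id - f ∘ₗ ρ) (fun b hb => by
    obtain ⟨a, rfl⟩ := h.exists_of b hb
    simp [hρ])
  refine factor_fin B x e t g fun z => ?_
  obtain ⟨b, rfl⟩ := h.2.1 z
  simp [ht, h.comp_zero]

/-- No nonzero element is killed by the maximal ideal. -/
def SF (R : Type u) [CommRing R] [IsLocalRing R] (N : Type u) [AddCommGroup N] [Module R N] : Prop :=
  ∀ z : N, (∀ x ∈ IsLocalRing.maximalIdeal R, x • z = 0) → z = 0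

/-- Elements killed by powers vanish in a socle free module. -/
lemma SF.eq_zero_of_pow [IsNoetherianRing R] (h : SF R A) (z : A)
    (hz : ∀ x ∈ IsLocalRing.maximalIdeal R, ∃ e : ℕ, x ^ e • z = 0) : z = 0 := by
  have hle : IsLocalRing.maximalIdeal R ≤ Ideal.radical (LinearMap.ker (LinearMap.toSpanSingleton R A z)) := by
    intro x hx
    obtain ⟨e, he⟩ := hz x hx
    exact ⟨e, by simpa using he⟩
  obtain ⟨N, hN⟩ := Ideal.exists_pow_le_of_le_radical_of_fg hle (IsNoetherian.noetherian _)
  have key : ∀ N : ℕ, ∀ y : A, (∀ r ∈ IsLocalRing.maximalIdeal R ^ N, r • y = 0) → y = 0 := by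
    intro N
    induction N with
    | zero => intro y hy; simpa using hy 1 (by simp)
    | succ N ih =>
      intro y hy
      refine ih y fun r hr => h _ fun x hx => ?_
      rw [smul_smul]
      exact hy _ (by rw [pow_succ']; exact Ideal.mul_mem_mul hx hr)
  exact key N z fun r hr => by simpa using hN hr

/-- Every functional factors through `φ`. -/
def IsApprox (φ : A →ₗ[R] B) : Prop := ∀ f : A →ₗ[R] R, ∃ e : B →ₗ[R] R, ∀ a, e (φ a) = f a

/-- Left approximation by a finite free module. -/
lemma exists_approx [IsNoetherianRing R] (A : Type u) [AddCommGroup A] [Module R A]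
    [Module.Finite R A] : ∃ (k : ℕ) (φ : A →ₗ[R] (Fin k → R)), IsApprox φ := by
  obtain ⟨k, p, hp⟩ := Module.Finite.exists_fin' R (A →ₗ[R] R)
  let φ : A →ₗ[R] (Fin k → R) := LinearMap.pi fun i => p (Pi.single i 1)
  refine ⟨k, φ, fun f => ?_⟩
  obtain ⟨c, rfl⟩ := hp f
  refine ⟨∑ i, c i • LinearMap.proj i, fun a => ?_⟩
  conv_rhs => rw [pi_eq_sum_univ' c]
  simp [φ, LinearMap.sum_apply]

lemma IsApprox.extend {φ : A →ₗ[R] B} (h : IsApprox φ) [Module.Finite R C] [Module.Projective R C]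
    (f : A →ₗ[R] C) : ∃ e : B →ₗ[R] C, ∀ a, e (φ a) = f a := by
  obtain ⟨k, i, p, hip⟩ := exists_retract_free (R := R) C
  choose e he using fun j => h (LinearMap.proj j ∘ₗ i ∘ₗ f)
  refine ⟨p ∘ₗ LinearMap.pi e, fun a => ?_⟩
  rw [← hip (f a)]
  simp only [LinearMap.comp_apply]
  congr 1
  ext j
  simp [he]

lemma IsApprox.pow {φ : A →ₗ[R] B} (h : IsApprox φ) (hA : LF R A) (x : R)
    (hx : x ∈ IsLocalRing.maximalIdeal R) :
    ∃ (e : ℕ) (ρ : B →ₗ[R] A), ∀ a, ρ (φ a) = x ^ e • a := by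
  obtain ⟨e, k, f, g, H⟩ := hA x hx
  obtain ⟨t, ht⟩ := h.extend f
  exact ⟨e, g ∘ₗ t, fun a => by simp [ht, H]⟩

lemma IsApprox.prodPi {φ : A →ₗ[R] B} (h : IsApprox φ) (a : ℕ) :
    IsApprox ((LinearMap.pi fun i : Fin a => φ ∘ₗ LinearMap.proj i).prodMap
      (LinearMap.id : C →ₗ[R] C)) := by
  intro f
  choose e he using fun j : Fin a => h (f ∘ₗ LinearMap.inl R _ _ ∘ₗ LinearMap.single R (fun _ => A) j)
  refine ⟨(∑ j, e j ∘ₗ LinearMap.proj j).coprod (f ∘ₗ LinearMap.inr R _ _), fun ⟨w, c⟩ => ?_⟩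
  have h1 : f (w, c) = f (w, 0) + f (0, c) := by rw [← map_add]; simp
  have h2 : (w, (0 : C)) = ∑ j, (Pi.single j (w j), 0) := by
    ext1
    · rw [Prod.fst_sum]; exact (Finset.univ_sum_single w).symm
    · rw [Prod.snd_sum]; simp
  rw [h1, h2, map_sum]
  simp [he, LinearMap.sum_apply]

/-- The kernel of an approximation meets a socle free submodule trivially. -/
lemma IsApprox.inj_of_SF [IsNoetherianRing R] {φ : B →ₗ[R] C} (h : IsApprox φ) (hB : LF R B)
    (hA : SF R A) (f : A →ₗ[R] B) (hf : Function.Injective f) (a : A) (ha : φ (f a) = 0) : a = 0 := by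
  refine hA.eq_zero_of_pow a fun x hx => ?_
  obtain ⟨e, ρ, hρ⟩ := h.pow hB x hx
  refine ⟨e, hf ?_⟩
  rw [map_smul, ← hρ, ha]
  simp

end LFsec

section LFlocal
variable {R : Type u} [CommRing R] [IsLocalRing R] [IsNoetherianRing R]

lemma LF_of_free (N : Type u) [AddCommGroup N] [Module R N] [Module.Finite R N]
    (h : ∀ p : PrimeSpectrum R, p.asIdeal ≠ IsLocalRing.maximalIdeal R →
      Module.Free (Localization.AtPrime p.asIdeal) (LocalizedModule p.asIdeal.primeCompl N)) :
    LF R N := by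
  intro x hx
  have : Module.FinitePresentation R N := Module.finitePresentation_of_finite R N
  have hsub : (PrimeSpectrum.basicOpen x : Set (PrimeSpectrum R)) ⊆ Module.freeLocus R N := by
    intro p hp
    refine h p fun hpm => ?_
    rw [SetLike.mem_coe, PrimeSpectrum.mem_basicOpen, hpm] at hp
    exact hp hx
  rw [Module.basicOpen_subset_freeLocus_iff] at hsub
  obtain ⟨k, π, hπ⟩ := Module.Finite.exists_fin' R N
  have hsurj : Function.Surjective (LocalizedModule.map (Submonoid.powers x) π) :=
    LocalizedModule.map_surjective (Submonoid.powers x) π hπ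
  obtain ⟨σ, hσ⟩ := Module.projective_lifting_property (R := Localization (Submonoid.powers x))
    (LocalizedModule.map (Submonoid.powers x) π) LinearMap.id hsurj
  obtain ⟨t, s, hts⟩ := Module.FinitePresentation.exists_lift_of_isLocalizedModule
    (Submonoid.powers x) (LocalizedModule.mkLinearMap (Submonoid.powers x) (Fin k → R))
    ((σ.restrictScalars R) ∘ₗ LocalizedModule.mkLinearMap (Submonoid.powers x) N)
  have hc : LocalizedModule.mkLinearMap (Submonoid.powers x) N ∘ₗ (π ∘ₗ t) =
      LocalizedModule.mkLinearMap (Submonoid.powers x) N ∘ₗ ((s : R) • LinearMap.id) := by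
    ext z
    have h1 := LinearMap.congr_fun hts z
    have h2 := LinearMap.congr_fun hσ (LocalizedModule.mkLinearMap (Submonoid.powers x) N z)
    have h3 := congrArg (LocalizedModule.map (Submonoid.powers x) π) h1
    simp only [LinearMap.comp_apply, LinearMap.smul_apply, LinearMap.id_apply,
      LocalizedModule.mkLinearMap_apply, LinearMap.restrictScalars_apply] at h1 h2 h3 ⊢
    rw [LocalizedModule.map_mk] at h3
    rw [h3, Submonoid.smul_def, LinearMap.map_smul_of_tower, h2, LocalizedModule.smul'_mk]
  obtain ⟨s', hs'⟩ := Module.Finite.exists_smul_of_comp_eq_of_isLocalizedModule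
    (Submonoid.powers x) _ _ _ hc
  obtain ⟨e, he⟩ := s.2
  obtain ⟨e', he'⟩ := s'.2
  refine ⟨e' + e, k, t, x ^ e' • π, fun z => ?_⟩
  have := LinearMap.congr_fun hs' z
  simp only [Submonoid.smul_def, LinearMap.smul_apply, LinearMap.comp_apply,
    LinearMap.id_apply] at this
  simp only at he he'
  rw [LinearMap.smul_apply, he', this, pow_add, mul_smul, he', he]

lemma LF.free {N : Type u} [AddCommGroup N] [Module R N] [Module.Finite R N] (h : LF R N)
    (p : PrimeSpectrum R) (hp : p.asIdeal ≠ IsLocalRing.maximalIdeal R) :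
    Module.Free (Localization.AtPrime p.asIdeal) (LocalizedModule p.asIdeal.primeCompl N) := by
  obtain ⟨x, hx, hxp⟩ : ∃ x ∈ IsLocalRing.maximalIdeal R, x ∉ p.asIdeal := by
    by_contra! hcon
    exact hp (le_antisymm (IsLocalRing.le_maximalIdeal p.2.ne_top) hcon)
  obtain ⟨e, k, f, g, H⟩ := h x hx
  let S := p.asIdeal.primeCompl
  let u : S := ⟨x ^ e, fun hxe => hxp (p.2.mem_of_pow_mem e hxe)⟩
  let f' := LocalizedModule.map S f
  let g' := LocalizedModule.map S g
  have hP : Module.Projective (Localization.AtPrime p.asIdeal) (LocalizedModule S (Fin k → R)) :=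
    Module.projective_of_isLocalizedModule S (LocalizedModule.mkLinearMap S (Fin k → R))
  have hproj : Module.Projective (Localization.AtPrime p.asIdeal) (LocalizedModule S N) := by
    refine Module.Projective.of_split f' ((Localization.mk 1 u : Localization S) • g') ?_
    ext z
    induction z using LocalizedModule.induction_on with
    | h z s =>
      simp only [f', g', LinearMap.comp_apply, LinearMap.smul_apply, LocalizedModule.map_mk, H,
        LinearMap.id_apply, LocalizedModule.mk_smul_mk, one_smul]
      rw [LocalizedModule.mk_eq]
      refine ⟨1, ?_⟩
      simp [Submonoid.smul_def, u, mul_smul, smul_comm s.1 (x ^ e)]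
  have : Module.Finite (Localization.AtPrime p.asIdeal) (LocalizedModule S N) := inferInstance
  exact Module.free_of_flat_of_isLocalRing

end LFlocal

section PDsec
set_option linter.unusedSectionVars false

/-- projective dimension `< n`. -/
def PDL (R : Type u) [CommRing R] (n : ℕ) (N : Type u) [AddCommGroup N] [Module R N] : Prop :=
  HasProjectiveDimensionLT (ModuleCat.of R N) n

variable {R : Type u} [CommRing R]
variable {A B C : Type u} [AddCommGroup A] [Module R A]
    [AddCommGroup B] [Module R B] [AddCommGroup C] [Module R C]

/-- the short complex of an `IsSES`. -/
noncomputable def sesComplex {f : A →ₗ[R] B} {g : B →ₗ[R] C} (h : IsSES f g) :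
    ShortComplex (ModuleCat.{u} R) :=
  ShortComplex.mk (ModuleCat.ofHom f) (ModuleCat.ofHom g) (by
    ext a
    have : f a ∈ LinearMap.ker g := h.2.2 ▸ ⟨a, rfl⟩
    exact this)

lemma sesComplex_shortExact {f : A →ₗ[R] B} {g : B →ₗ[R] C} (h : IsSES f g) :
    (sesComplex h).ShortExact := by
  have h1 : Mono (sesComplex h).f := (ModuleCat.mono_iff_injective _).2 h.1
  have h2 : Epi (sesComplex h).g := (ModuleCat.epi_iff_surjective _).2 h.2.1
  refine ⟨?_⟩
  rw [ShortComplex.moduleCat_exact_iff]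
  intro x hx
  have : x ∈ LinearMap.range f := h.2.2 ▸ hx
  exact this

lemma PDL.mid {f : A →ₗ[R] B} {g : B →ₗ[R] C} (h : IsSES f g) {n : ℕ} (hA : PDL R n A)
    (hC : PDL R n C) : PDL R n B :=
  (sesComplex_shortExact h).hasProjectiveDimensionLT_X₂ n hA hC

lemma PDL.right {f : A →ₗ[R] B} {g : B →ₗ[R] C} (h : IsSES f g) {n : ℕ} (hA : PDL R n A)
    (hB : PDL R (n + 1) B) : PDL R (n + 1) C :=
  (sesComplex_shortExact h).hasProjectiveDimensionLT_X₃ n hA hB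

lemma PDL.left {f : A →ₗ[R] B} {g : B →ₗ[R] C} (h : IsSES f g) {n : ℕ} (hB : PDL R n B)
    (hC : PDL R (n + 1) C) : PDL R n A :=
  (sesComplex_shortExact h).hasProjectiveDimensionLT_X₁ n hB hC

lemma PDL.mono {n m : ℕ} (h : PDL R n A) (hnm : n ≤ m) : PDL R m A := by
  have : HasProjectiveDimensionLT (ModuleCat.of R A) n := h
  exact hasProjectiveDimensionLT_of_ge _ n m hnm

lemma PDL_one_iff : PDL R 1 A ↔ Module.Projective R A := by
  unfold PDL
  rw [← projective_iff_hasProjectiveDimensionLT_one, IsProjective.iff_projective]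

lemma PDL_zero_iff : PDL R 0 A ↔ Subsingleton A := by
  unfold PDL
  rw [hasProjectiveDimensionLT_zero_iff_isZero, ModuleCat.isZero_iff_subsingleton]

lemma PDL.left_proj {f : A →ₗ[R] B} {g : B →ₗ[R] C} (h : IsSES f g) {n : ℕ}
    (hB : Module.Projective R B) (hC : PDL R (n + 2) C) : PDL R (n + 1) A :=
  PDL.left h (PDL.mono (PDL_one_iff.2 hB) (by omega)) hC

lemma PDL.right_proj {f : A →ₗ[R] B} {g : B →ₗ[R] C} (h : IsSES f g) {n : ℕ}
    (hB : Module.Projective R B) (hA : PDL R n A) : PDL R (n + 1) C :=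
  PDL.right h hA (PDL.mono (PDL_one_iff.2 hB) (by omega))

lemma PDL.retract (i : A →ₗ[R] B) (p : B →ₗ[R] A) (h : ∀ a, p (i a) = a) {n : ℕ}
    (hB : PDL R n B) : PDL R n A := by
  have : HasProjectiveDimensionLT (ModuleCat.of R B) n := hB
  refine Retract.hasProjectiveDimensionLT
    (⟨ModuleCat.ofHom i, ModuleCat.ofHom p, ?_⟩ : Retract (ModuleCat.of R A) (ModuleCat.of R B)) n
  ext a
  exact h a

lemma ker_ses {g : B →ₗ[R] C} (hg : Function.Surjective g) :
    IsSES (LinearMap.ker g).subtype g :=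
  ⟨Subtype.val_injective, hg, by simp⟩

lemma pdLE_iff [IsNoetherianRing R] (n : ℕ) : ∀ (N : ModuleCat.{u} R), Module.Finite R N →
    (pdLE R n N ↔ PDL R (n + 1) N) := by
  induction n with
  | zero =>
    intro N _
    exact PDL_one_iff.symm
  | succ n ih =>
    intro N hN
    constructor
    · rintro ⟨K, P, f, g, hPf, hPp, h, hK⟩
      have : Module.Finite R K := Module.Finite.of_injective f h.1
      exact PDL.right_proj h hPp ((ih K this).1 hK)
    · intro h
      obtain ⟨k, π, hπ⟩ := Module.Finite.exists_fin' R N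
      have hs := ker_ses hπ
      refine ⟨ModuleCat.of R (LinearMap.ker π), ModuleCat.of R (Fin k → R), _, π,
        inferInstanceAs (Module.Finite R (Fin k → R)),
        inferInstanceAs (Module.Projective R (Fin k → R)), hs, ?_⟩
      exact (ih (ModuleCat.of R (LinearMap.ker π))
        (inferInstanceAs (Module.Finite R (LinearMap.ker π)))).2 (PDL.left_proj hs inferInstance h)

variable [IsLocalRing R]

/-- the category `PD_0^{n-1}`. -/
structure Q (R : Type u) [CommRing R] [IsLocalRing R] (n : ℕ) (N : Type u) [AddCommGroup N]
    [Module R N] : Prop where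
  fin : Module.Finite R N
  pd : PDL R n N
  lf : LF R N

lemma Q.retract (i : A →ₗ[R] B) (p : B →ₗ[R] A) (h : ∀ a, p (i a) = a) {n : ℕ}
    (hB : Q R n B) : Q R n A :=
  ⟨have := hB.fin; Module.Finite.of_surjective p fun a => ⟨i a, h a⟩, hB.pd.retract i p h,
    hB.lf.retract i p h⟩

lemma Q.of_equiv (e : A ≃ₗ[R] B) {n : ℕ} (hA : Q R n A) : Q R n B :=
  hA.retract e.symm.toLinearMap e.toLinearMap (by simp)

lemma Q.mono {n m : ℕ} (h : Q R n A) (hnm : n ≤ m) : Q R m A := ⟨h.fin, h.pd.mono hnm, h.lf⟩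

lemma Q.mid {f : A →ₗ[R] B} {g : B →ₗ[R] C} (h : IsSES f g) {n : ℕ} (hA : Q R n A)
    (hC : Q R n C) : Q R n B := by
  refine ⟨?_, hA.pd.mid h hC.pd, hA.lf.ext h hC.lf⟩
  have := hA.fin
  have := hC.fin
  exact Module.Finite.of_exact (LinearMap.exact_iff.2 h.2.2.symm) h.2.1

lemma Q.syz [IsNoetherianRing R] {f : A →ₗ[R] B} {g : B →ₗ[R] C} (h : IsSES f g) {n : ℕ}
    [Module.Finite R B] (hB : Module.Projective R B)
    (hC : Q R (n + 2) C) : Q R (n + 1) A :=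
  ⟨Module.Finite.of_injective f h.1, hC.pd.left_proj h hB, LF.ker h LF.of_projective hC.lf⟩

lemma Q.of_proj [Module.Finite R A] [Module.Projective R A] (n : ℕ) : Q R (n + 1) A :=
  ⟨inferInstance, (PDL_one_iff.2 inferInstance).mono (by omega), LF.of_projective⟩

lemma prod_ses (A B : Type u) [AddCommGroup A] [Module R A]
    [AddCommGroup B] [Module R B] : IsSES (LinearMap.inl R A B) (LinearMap.snd R A B) :=
  IsSES.mk' (by simp) LinearMap.snd_surjective (by simp) (fun ⟨a, b⟩ h => ⟨a, by simpa using h.symm⟩)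

lemma Q.prod {n : ℕ} (hA : Q R n A) (hB : Q R n B) : Q R n (A × B) :=
  Q.mid (prod_ses A B) hA hB

lemma Q.resolving [IsNoetherianRing R] (n : ℕ) : IsResolving R {N : ModuleCat.{u} R | Q R (n + 1) N} where
  fg := fun M hM => Q.fin hM
  iso_closed := fun M N ⟨e⟩ h => Q.of_equiv e h
  proj_mem := fun M _ _ => Q.of_proj n
  summand_closed := fun M N h => Q.retract (B := M × N) (LinearMap.inl R M N) (LinearMap.fst R M N)
    (by simp) h
  ext_closed := fun A B C f g h hA hC => Q.mid h hA hC
  syzygy_closed := fun K P M f g h _ _ hP hM =>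
    (Q.syz h hP (Q.mono hM (by omega) : Q R (n + 2) M)).mono (by omega)

lemma PD0n_eq [IsNoetherianRing R] (n : ℕ) : PD0n R n = {N : ModuleCat.{u} R | Q R (n + 1) N} := by
  ext N
  constructor
  · rintro ⟨h1, h2, h3⟩
    exact ⟨h1, (pdLE_iff n N h1).1 h2, LF_of_free N h3⟩
  · rintro ⟨h1, h2, h3⟩
    exact ⟨h1, (pdLE_iff n N h1).2 h2, fun p hp => h3.free p hp⟩

end PDsec

section Depthsec
set_option linter.unusedSectionVars false

variable {R : Type u} [CommRing R] [IsLocalRing R]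
variable {A B C : Type u} [AddCommGroup A] [Module R A]
    [AddCommGroup B] [Module R B] [AddCommGroup C] [Module R C]

/-- the residue field as a bundled module. -/
noncomputable abbrev kmod (R : Type u) [CommRing R] [IsLocalRing R] : ModuleCat.{u} R :=
  ModuleCat.of R (IsLocalRing.ResidueField R)

/-- vanishing of `Ext^i(k, N)`. -/
def EV (R : Type u) [CommRing R] [IsLocalRing R] (i : ℕ) (N : Type u) [AddCommGroup N]
    [Module R N] : Prop :=
  ∀ y : Abelian.Ext (kmod R) (ModuleCat.of R N) i, y = 0

lemma EV.left_succ {f : A →ₗ[R] B} {g : B →ₗ[R] C} (h : IsSES f g) {i : ℕ} (hB : EV R (i + 1) B)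
    (hC : EV R i C) : EV R (i + 1) A := by
  intro y
  obtain ⟨x, hx⟩ := Abelian.Ext.covariant_sequence_exact₁ (kmod R) (sesComplex_shortExact h)
    (n₁ := i + 1) y (hB _) (n₀ := i) rfl
  rw [← hx, show x = 0 from hC x, Abelian.Ext.zero_comp]
  rfl

lemma EV.inj_succ {f : A →ₗ[R] B} {g : B →ₗ[R] C} (h : IsSES f g) {i : ℕ}
    (hC : EV R i C) (y : Abelian.Ext (kmod R) (ModuleCat.of R A) (i + 1))
    (hy : y.comp (Abelian.Ext.mk₀ (ModuleCat.ofHom f)) (add_zero _) = 0) : y = 0 := by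
  obtain ⟨x, hx⟩ := Abelian.Ext.covariant_sequence_exact₁ (kmod R) (sesComplex_shortExact h)
    (n₁ := i + 1) y hy (n₀ := i) rfl
  rw [← hx, show x = 0 from hC x, Abelian.Ext.zero_comp]
  rfl

lemma EV.inj_zero {f : A →ₗ[R] B} (h : Function.Injective f)
    (y : Abelian.Ext (kmod R) (ModuleCat.of R A) 0)
    (hy : y.comp (Abelian.Ext.mk₀ (ModuleCat.ofHom f)) (add_zero _) = 0) : y = 0 := by
  have : Mono (ModuleCat.ofHom f) := (ModuleCat.mono_iff_injective _).2 h
  apply Abelian.Ext.postcomp_mk₀_injective_of_mono (kmod R) (ModuleCat.ofHom f)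
  rw [map_zero]
  exact hy

lemma EV.left_zero {f : A →ₗ[R] B} (h : Function.Injective f) (hB : EV R 0 B) : EV R 0 A :=
  fun y => EV.inj_zero h y (hB _)

lemma EV.right {f : A →ₗ[R] B} {g : B →ₗ[R] C} (h : IsSES f g) {i : ℕ} (hB : EV R i B)
    (hA : EV R (i + 1) A) : EV R i C := by
  intro y
  obtain ⟨x, hx⟩ := Abelian.Ext.covariant_sequence_exact₃ (kmod R) (sesComplex_shortExact h)
    y (n₁ := i + 1) rfl (hA _)
  rw [← hx, show x = 0 from hB x, Abelian.Ext.zero_comp]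
  rfl

lemma EV.retract (i : A →ₗ[R] B) (p : B →ₗ[R] A) (h : ∀ a, p (i a) = a) {t : ℕ}
    (hB : EV R t B) : EV R t A := by
  intro y
  have h1 : (ModuleCat.ofHom i) ≫ (ModuleCat.ofHom p) = 𝟙 (ModuleCat.of R A) := by
    ext a; exact h a
  rw [← Abelian.Ext.comp_mk₀_id y, ← h1, ← Abelian.Ext.mk₀_comp_mk₀,
    ← Abelian.Ext.comp_assoc_of_second_deg_zero,
    show y.comp (Abelian.Ext.mk₀ (ModuleCat.ofHom i)) (add_zero _) = 0 from hB _,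
    Abelian.Ext.zero_comp]

lemma EV.pi {t : ℕ} (hR : EV R t R) (k : ℕ) : EV R t (Fin k → R) := by
  intro y
  have h1 : ∑ j : Fin k, (ModuleCat.ofHom (LinearMap.proj (R := R) (φ := fun _ : Fin k => R) j)) ≫
      (ModuleCat.ofHom (LinearMap.single R (fun _ : Fin k => R) j)) =
      𝟙 (ModuleCat.of R (Fin k → R)) := by
    ext v i
    simp only [ModuleCat.hom_sum, ModuleCat.hom_comp, ModuleCat.hom_ofHom, ModuleCat.hom_id]
    simp [LinearMap.sum_apply, Finset.sum_apply, Pi.single_apply]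
  rw [← Abelian.Ext.comp_mk₀_id y, ← h1, Abelian.Ext.mk₀_sum, Abelian.Ext.comp_sum]
  refine Finset.sum_eq_zero fun j _ => ?_
  rw [← Abelian.Ext.mk₀_comp_mk₀, ← Abelian.Ext.comp_assoc_of_second_deg_zero,
    show y.comp (Abelian.Ext.mk₀ (ModuleCat.ofHom (LinearMap.proj j))) (add_zero _) = 0 from hR _,
    Abelian.Ext.zero_comp]

lemma EV.proj {t : ℕ} (hR : EV R t R) [Module.Finite R A] [Module.Projective R A] : EV R t A := by
  obtain ⟨k, i, p, h⟩ := exists_retract_free (R := R) A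
  exact (hR.pi k).retract i p h

lemma ext_smul_zero {t : ℕ} (y : Abelian.Ext (kmod R) (ModuleCat.of R A) t) (x : R)
    (hx : x ∈ IsLocalRing.maximalIdeal R) : x • y = 0 := by
  have h1 : x • (𝟙 (kmod R)) = 0 := by
    ext c
    obtain ⟨c, rfl⟩ := IsLocalRing.residue_surjective c
    change x • (IsLocalRing.residue R c) = 0
    rw [Algebra.smul_def]
    change IsLocalRing.residue R x * _ = 0
    rw [(IsLocalRing.residue_eq_zero_iff x).2 hx, zero_mul]
  rw [← Abelian.Ext.mk₀_id_comp y, ← Abelian.Ext.smul_comp, ← Abelian.Ext.mk₀_smul, h1,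
    Abelian.Ext.mk₀_zero, Abelian.Ext.zero_comp]

lemma ext_comp_zero {t r : ℕ} (d : A →ₗ[R] B) (x : Fin r → R)
    (hx : ∀ i, x i ∈ IsLocalRing.maximalIdeal R) (D : Fin r → (A →ₗ[R] B))
    (hd : d = ∑ i, x i • D i)
    (y : Abelian.Ext (kmod R) (ModuleCat.of R A) t) :
    y.comp (Abelian.Ext.mk₀ (ModuleCat.ofHom d)) (add_zero _) = 0 := by
  have h1 : ModuleCat.ofHom d = ∑ i, x i • ModuleCat.ofHom (D i) := by
    ext a
    simp only [ModuleCat.hom_sum, ModuleCat.hom_smul, ModuleCat.hom_ofHom, hd]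
  rw [h1, Abelian.Ext.mk₀_sum, Abelian.Ext.comp_sum]
  refine Finset.sum_eq_zero fun j _ => ?_
  rw [Abelian.Ext.mk₀_smul, Abelian.Ext.comp_smul]
  exact ext_smul_zero _ _ (hx j)

lemma EV.SF (h : EV R 0 A) : SF R A := by
  intro z hz
  let f : IsLocalRing.ResidueField R →ₗ[R] A :=
    Submodule.liftQ (IsLocalRing.maximalIdeal R) (LinearMap.toSpanSingleton R A z) (by
      intro x hx
      simpa using hz x hx)
  have h1 := h (Abelian.Ext.mk₀ (ModuleCat.ofHom f))
  have h2 : ModuleCat.ofHom f = 0 := by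
    apply (Abelian.Ext.mk₀_bijective (kmod R) (ModuleCat.of R A)).1
    rw [h1, Abelian.Ext.mk₀_zero]
  have h3 : f = 0 := by
    ext a
    have := congrArg (fun q => q.hom a) h2
    exact this
  have h4 : f (Submodule.Quotient.mk 1) = z := by
    change Submodule.liftQ _ _ _ (Submodule.Quotient.mk 1) = z
    rw [Submodule.liftQ_apply]
    simp
  rw [← h4, h3]; rfl

/-- the minimal cover -/
lemma exists_min_cover (J : Type u) [AddCommGroup J] [Module R J] [Module.Finite R J] :
    ∃ (b : ℕ) (π : (Fin b → R) →ₗ[R] J), Function.Surjective π ∧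
      ∀ v, π v = 0 → ∀ j, v j ∈ IsLocalRing.maximalIdeal R := by
  classical
  have hex : ∃ b : ℕ, ∃ π : (Fin b → R) →ₗ[R] J, Function.Surjective π :=
    Module.Finite.exists_fin' R J
  obtain ⟨π, hπ⟩ := Nat.find_spec hex
  refine ⟨Nat.find hex, π, hπ, ?_⟩
  have hmin : ∀ b, b < Nat.find hex → ¬ ∃ π : (Fin b → R) →ₗ[R] J, Function.Surjective π :=
    fun b hb => Nat.find_min hex hb
  revert hmin π
  generalize Nat.find hex = b
  intro π hπ hmin v hv j
  by_contra hj
  have hu : IsUnit (v j) := by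
    by_contra h
    exact hj ((IsLocalRing.mem_maximalIdeal _).2 h)
  obtain ⟨c, hc⟩ := hu.exists_left_inv
  obtain _ | b := b
  · exact j.elim0
  refine hmin b (by omega) ⟨∑ i, (LinearMap.toSpanSingleton R J (π (Pi.single (j.succAbove i) 1))) ∘ₗ
    LinearMap.proj i, fun y => ?_⟩
  obtain ⟨w, rfl⟩ := hπ y
  have hw : π w = π (w - (w j * c) • v) := by simp [hv]
  generalize hw' : w - (w j * c) • v = w' at hw
  have hj0 : w' j = 0 := by
    rw [← hw']; simp [mul_assoc, hc]
  refine ⟨fun i => w' (j.succAbove i), ?_⟩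
  rw [hw]
  conv_rhs => rw [pi_eq_sum_univ' w', map_sum, Fin.sum_univ_succAbove _ j, hj0]
  simp [LinearMap.sum_apply]

/-- minimal presentation of a module of projective dimension at most one. -/
lemma exists_min_pres [IsNoetherianRing R] (J : Type u) [AddCommGroup J] [Module R J]
    [Module.Finite R J] (hJ : PDL R 2 J) {r : ℕ} (x : Fin r → R)
    (hx : Ideal.span (Set.range x) = IsLocalRing.maximalIdeal R) :
    ∃ (a b : ℕ) (d : (Fin a → R) →ₗ[R] (Fin b → R)) (π : (Fin b → R) →ₗ[R] J)
      (D : Fin r → ((Fin a → R) →ₗ[R] (Fin b → R))), IsSES d π ∧ d = ∑ i, x i • D i := by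
  obtain ⟨b, π, hπ, hm⟩ := exists_min_cover (R := R) J
  have hs := ker_ses hπ
  have : Module.Projective R (LinearMap.ker π) := PDL_one_iff.1 (hJ.left_proj hs inferInstance)
  have : Module.Free R (LinearMap.ker π) := Module.free_of_flat_of_isLocalRing
  let e := (Module.finBasis R (LinearMap.ker π)).equivFun
  set a := Module.finrank R (LinearMap.ker π)
  let d : (Fin a → R) →ₗ[R] (Fin b → R) := (LinearMap.ker π).subtype ∘ₗ e.symm.toLinearMap
  have hd : IsSES d π := IsSES.mk' (fun v hv => by
      have : (e.symm v : LinearMap.ker π) = 0 := Subtype.ext hv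
      simpa using this) hπ (fun v => (e.symm v).2) (fun v hv => ⟨e ⟨v, hv⟩, by simp [d]⟩)
  have hc : ∀ (c : Fin a) (j : Fin b), ∃ co : Fin r → R, ∑ i, co i * x i = d (Pi.single c 1) j := by
    intro c j
    have : d (Pi.single c 1) j ∈ IsLocalRing.maximalIdeal R := hm _ (hd.comp_zero _) j
    rw [← hx] at this
    obtain ⟨co, h⟩ := (Submodule.mem_span_range_iff_exists_fun R).1 this
    exact ⟨co, by simpa using h⟩
  choose co hco using hc
  refine ⟨a, b, d, π, fun i => ∑ c, LinearMap.toSpanSingleton R (Fin b → R) (fun j => co c j i) ∘ₗ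
    LinearMap.proj c, hd, ?_⟩
  refine LinearMap.pi_ext' fun c => LinearMap.ext_ring ?_
  ext j
  simp only [LinearMap.comp_apply, LinearMap.single_apply, ← hco]
  simp [LinearMap.sum_apply, Finset.sum_apply, Pi.single_apply, mul_comm]

lemma exists_max_gens (R : Type u) [CommRing R] [IsLocalRing R] [IsNoetherianRing R] :
    ∃ (r : ℕ) (x : Fin r → R), Ideal.span (Set.range x) = IsLocalRing.maximalIdeal R := by
  obtain ⟨r, x, h⟩ := Submodule.fg_iff_exists_fin_generating_family.1
    (IsNoetherian.noetherian (IsLocalRing.maximalIdeal R))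
  exact ⟨r, x, h⟩

lemma EV_step [IsNoetherianRing R] (t : ℕ) (hR : ∀ i < t, EV R i R) (n : ℕ) :
    ∀ (M : Type u) [AddCommGroup M] [Module R M] [Module.Finite R M] (s : ℕ),
      PDL R (n + 2) M → ¬ PDL R (n + 1) M → (∀ i < s, i < t → EV R i M) → t < n + 1 + s →
      EV R t R := by
  induction n with
  | zero =>
    intro M _ _ _ s h2 h1 hM hts
    obtain ⟨r, x, hx⟩ := exists_max_gens R
    have hxm : ∀ i, x i ∈ IsLocalRing.maximalIdeal R := fun i =>
      hx ▸ Ideal.subset_span ⟨i, rfl⟩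
    obtain ⟨a, b, d, π, D, hd, hD⟩ := exists_min_pres M h2 x hx
    have ha : a ≠ 0 := by
      rintro rfl
      exact h1 (PDL.right hd (PDL_zero_iff.2 inferInstance) (PDL_one_iff.2 inferInstance))
    have hA : EV R t (Fin a → R) := by
      intro y
      have hy := ext_comp_zero d x hxm D hD y
      obtain _ | t := t
      · exact EV.inj_zero hd.1 y hy
      · exact EV.inj_succ hd (hM t (by omega) (by omega)) y hy
    obtain ⟨a, rfl⟩ := Nat.exists_eq_succ_of_ne_zero ha
    exact hA.retract (LinearMap.single R (fun _ => R) 0) (LinearMap.proj 0) (by simp)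
  | succ n ih =>
    intro M _ _ _ s h2 h1 hM hts
    obtain ⟨b, π, hπ⟩ := Module.Finite.exists_fin' R M
    have hs := ker_ses hπ
    refine ih (LinearMap.ker π) (s + 1) (h2.left_proj hs inferInstance)
      (fun h => h1 (PDL.right_proj hs inferInstance h)) ?_ (by omega)
    intro i his hit
    obtain _ | i := i
    · exact EV.left_zero hs.1 ((hR 0 hit).proj)
    · exact EV.left_succ hs ((hR _ hit).proj) (hM i (by omega) (by omega))

lemma EV_ring [IsNoetherianRing R] (n : ℕ) (M : Type u) [AddCommGroup M] [Module R M]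
    [Module.Finite R M] (h2 : PDL R (n + 1) M) (h1 : ¬ PDL R n M) (t : ℕ) (ht : t < n) :
    EV R t R := by
  obtain _ | n := n
  · omega
  induction t using Nat.strong_induction_on with
  | _ t ih => exact EV_step t (fun i hi => ih i hi (by omega)) n M 0 h2 h1 (by simp) (by omega)

lemma EV_of_pd [IsNoetherianRing R] (n : ℕ) (hR : ∀ i < n, EV R i R) (j : ℕ) :
    ∀ (i : ℕ) (N : Type u) [AddCommGroup N] [Module R N] [Module.Finite R N], i + j < n →
      PDL R (j + 1) N → EV R i N := by
  induction j with
  | zero =>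
    intro i N _ _ _ hi h
    have := PDL_one_iff.1 h
    exact (hR i hi).proj
  | succ j ih =>
    intro i N _ _ _ hi h
    obtain ⟨b, π, hπ⟩ := Module.Finite.exists_fin' R N
    have hs := ker_ses hπ
    exact EV.right hs ((hR i (by omega)).proj) (ih (i + 1) _ (by omega)
      (h.left_proj hs inferInstance))

/-- Depth lemma. -/
lemma SF_of_pd [IsNoetherianRing R] (n : ℕ) (M : Type u) [AddCommGroup M] [Module R M]
    [Module.Finite R M] (h2 : PDL R (n + 1) M) (h1 : ¬ PDL R n M) (N : Type u) [AddCommGroup N]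
    [Module R N] [Module.Finite R N] (hN : PDL R n N) : SF R N := by
  obtain _ | n := n
  · intro z _
    have := PDL_zero_iff.1 hN
    exact Subsingleton.elim _ _
  · exact (EV_of_pd (n + 1) (fun i hi => EV_ring (n + 1) M h2 h1 i hi) n 0 N (by omega) hN).SF

end Depthsec

section Wsec
set_option linter.unusedSectionVars false

variable {R : Type u} [CommRing R] [IsLocalRing R]
variable {A B C : Type u} [AddCommGroup A] [Module R A]
    [AddCommGroup B] [Module R B] [AddCommGroup C] [Module R C]

/-- membership of an unbundled module. -/
def Mem (𝒳 : Set (ModuleCat.{u} R)) (N : Type u) [AddCommGroup N] [Module R N] : Prop :=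
  ModuleCat.of R N ∈ 𝒳

variable {𝒳 : Set (ModuleCat.{u} R)}

lemma Mem.of_equiv (hX : IsResolving R 𝒳) (e : A ≃ₗ[R] B) (h : Mem 𝒳 A) : Mem 𝒳 B :=
  hX.iso_closed _ _ ⟨e⟩ h

lemma Mem.mid (hX : IsResolving R 𝒳) {f : A →ₗ[R] B} {g : B →ₗ[R] C} (h : IsSES f g)
    (hA : Mem 𝒳 A) (hC : Mem 𝒳 C) : Mem 𝒳 B :=
  hX.ext_closed (ModuleCat.of R A) (ModuleCat.of R B) (ModuleCat.of R C) f g h hA hC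

lemma Mem.proj (hX : IsResolving R 𝒳) [h1 : Module.Finite R A] [h2 : Module.Projective R A] :
    Mem 𝒳 A := hX.proj_mem (ModuleCat.of R A) h1 h2

lemma Mem.syz [IsNoetherianRing R] (hX : IsResolving R 𝒳) {f : A →ₗ[R] B} {g : B →ₗ[R] C}
    (h : IsSES f g) [h1 : Module.Finite R B] [h2 : Module.Projective R B] (hC : Mem 𝒳 C) : Mem 𝒳 A :=
  hX.syzygy_closed (ModuleCat.of R A) (ModuleCat.of R B) (ModuleCat.of R C) f g h
    (Module.Finite.of_injective f h.1) h1 h2 hC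

lemma Mem.fst (hX : IsResolving R 𝒳) (h : Mem 𝒳 (A × B)) : Mem 𝒳 A :=
  hX.summand_closed (ModuleCat.of R A) (ModuleCat.of R B) h

lemma Mem.prod (hX : IsResolving R 𝒳) (hA : Mem 𝒳 A) (hB : Mem 𝒳 B) : Mem 𝒳 (A × B) := by
  refine Mem.mid hX (f := LinearMap.inl R A B) (g := LinearMap.snd R A B) ?_ hA hB
  refine ⟨LinearMap.inl_injective, LinearMap.snd_surjective, ?_⟩
  exact LinearMap.range_inl R A B

lemma Mem.pi (hX : IsResolving R 𝒳) (hA : Mem 𝒳 A) (k : ℕ) : Mem 𝒳 (Fin k → A) := by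
  induction k with
  | zero => exact Mem.proj hX
  | succ k ih =>
    exact (hA.prod hX ih).of_equiv hX (Fin.consLinearEquiv R (fun _ : Fin (k + 1) => A))

/-- the fibre product of `π` and multiplication by `x`. -/
abbrev WW {F Z : Type u} [AddCommGroup F] [Module R F] [AddCommGroup Z] [Module R Z]
    (π : F →ₗ[R] Z) (x : R) : Submodule R (F × Z) :=
  LinearMap.ker (π ∘ₗ LinearMap.fst R F Z - x • LinearMap.snd R F Z)

variable {F Z : Type u} [AddCommGroup F] [Module R F] [AddCommGroup Z] [Module R Z]

lemma mem_WW {π : F →ₗ[R] Z} {x : R} {p : F × Z} : p ∈ WW π x ↔ π p.1 = x • p.2 := by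
  simp [WW, sub_eq_zero]

lemma WW_ses {π : F →ₗ[R] Z} (hπ : Function.Surjective π) (x : R) :
    IsSES (((LinearMap.inl R F Z) ∘ₗ (LinearMap.ker π).subtype).codRestrict (WW π x)
      (fun f => mem_WW.2 (by simp)))
      (LinearMap.snd R F Z ∘ₗ (WW π x).subtype) := by
  constructor
  · intro a b h
    have := congrArg (fun w => w.1.1) h
    exact Subtype.ext this
  · refine ⟨fun z => ?_, le_antisymm ?_ ?_⟩
    · obtain ⟨f, hf⟩ := hπ (x • z)
      exact ⟨⟨(f, z), mem_WW.2 hf⟩, rfl⟩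
    · rintro _ ⟨a, rfl⟩
      rfl
    · rintro ⟨⟨f, z⟩, h⟩ hz
      have hz' : z = 0 := hz
      subst hz'
      refine ⟨⟨f, ?_⟩, rfl⟩
      simpa using mem_WW.1 h

lemma WW_mem [IsNoetherianRing R] (hX : IsResolving R 𝒳) {π : F →ₗ[R] Z}
    (hπ : Function.Surjective π) (x : R)
    [Module.Finite R F] [Module.Projective R F] (hZ : Mem 𝒳 Z) : Mem 𝒳 (WW π x) :=
  Mem.mid hX (WW_ses hπ x) (Mem.syz hX (ker_ses hπ) hZ) hZ

lemma WW_mul_ses {π : F →ₗ[R] Z} (hπ : Function.Surjective π) (x y : R) :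
    IsSES (A := WW π x) (B := WW π (x * y) × F) (C := WW π y)
      ((((y • LinearMap.fst R F Z).prod (LinearMap.snd R F Z) ∘ₗ (WW π x).subtype).codRestrict
        (WW π (x * y)) (fun w => mem_WW.2 (by
          have := mem_WW.1 w.2
          simp [this, smul_smul, mul_comm]))).prod (-(LinearMap.fst R F Z ∘ₗ (WW π x).subtype)))
      ((((LinearMap.fst R F Z ∘ₗ (WW π (x * y)).subtype).coprod (y • LinearMap.id)).prod
        ((x • LinearMap.snd R F Z ∘ₗ (WW π (x * y)).subtype).coprod π)).codRestrict (WW π y) (by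
          rintro ⟨w, h⟩
          refine mem_WW.2 ?_
          have := mem_WW.1 w.2
          simp [this, smul_smul, mul_comm])) := by
  refine ⟨?_, ?_, le_antisymm ?_ ?_⟩
  · rintro ⟨⟨f, z⟩, h⟩ ⟨⟨f', z'⟩, h'⟩ e
    have e1 := congrArg (fun w => w.1.1.2) e
    have e2 := congrArg (fun w => w.2) e
    simp at e1 e2
    simp [e1, e2]
  · rintro ⟨⟨f, z⟩, h⟩
    obtain ⟨v, hv⟩ := hπ z
    have h' : π f = y • z := mem_WW.1 h
    refine ⟨(⟨(f - y • v, 0), mem_WW.2 ?_⟩, v), ?_⟩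
    · simp [h', hv]
    · ext <;> simp [hv]
  · rintro _ ⟨⟨⟨f, z⟩, h⟩, rfl⟩
    have := mem_WW.1 h
    simp only [LinearMap.mem_ker]
    ext <;> simp_all
  · rintro ⟨⟨⟨f, z⟩, h⟩, g⟩ e
    have e1 : f + y • g = 0 := congrArg (fun w => w.1.1) e
    have e2 : x • z + π g = 0 := congrArg (fun w => w.1.2) e
    refine ⟨⟨(-g, z), mem_WW.2 ?_⟩, ?_⟩
    · simp [eq_neg_of_add_eq_zero_left e2]
    · have e3 := eq_neg_of_add_eq_zero_left e1
      subst e3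
      ext <;> simp

lemma WW_pow_mem [IsNoetherianRing R] (hX : IsResolving R 𝒳) {π : F →ₗ[R] Z}
    (hπ : Function.Surjective π) (x : R)
    [Module.Finite R F] [Module.Projective R F] (h : Mem 𝒳 (WW π x)) (N : ℕ) :
    Mem 𝒳 (WW π (x ^ N)) := by
  induction N with
  | zero =>
    let t : F →ₗ[R] WW π (x ^ 0) := (LinearMap.id.prod π).codRestrict _ (fun f => mem_WW.2 (by simp))
    have ht : Function.Bijective t := by
      constructor
      · intro a b e
        exact congrArg (fun w => w.1.1) e
      · rintro ⟨⟨f, z⟩, h⟩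
        have h' : π f = x ^ 0 • z := mem_WW.1 h
        refine ⟨f, ?_⟩
        ext
        · rfl
        · simpa [t] using h'
    exact (Mem.proj hX (A := F)).of_equiv hX (LinearEquiv.ofBijective t ht)
  | succ N ih =>
    rw [pow_succ]
    exact (Mem.mid hX (WW_mul_ses hπ (x ^ N) x) ih h).fst hX

lemma WW_mem_iff [IsNoetherianRing R] (hX : IsResolving R 𝒳) {π : F →ₗ[R] Z}
    (hπ : Function.Surjective π) (x : R) (hx : x ∈ IsLocalRing.maximalIdeal R)
    [Module.Finite R F] [Module.Projective R F] (hZ : LF R Z) : Mem 𝒳 Z ↔ Mem 𝒳 (WW π x) := by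
  refine ⟨WW_mem hX hπ x, fun h => ?_⟩
  obtain ⟨N, s, hs⟩ := hZ.lift π hπ x hx
  have h1 := WW_pow_mem hX hπ x h N
  let t : WW π (x ^ N) →ₗ[R] Z × LinearMap.ker π :=
    (LinearMap.snd R F Z ∘ₗ (WW π (x ^ N)).subtype).prod
      (((LinearMap.fst R F Z - s ∘ₗ LinearMap.snd R F Z) ∘ₗ (WW π (x ^ N)).subtype).codRestrict
        (LinearMap.ker π) (fun w => by
          have := mem_WW.1 w.2
          simp [this, hs]))
  have ht : Function.Bijective t := by
    constructor
    · rintro ⟨⟨f, z⟩, h⟩ ⟨⟨f', z'⟩, h'⟩ e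
      have e1 : z = z' := congrArg (fun w => w.1) e
      have e2 : f - s z = f' - s z' := congrArg (fun w => w.2.1) e
      subst e1
      ext
      · simpa using e2
      · rfl
    · rintro ⟨z, ⟨f, hf⟩⟩
      refine ⟨⟨(f + s z, z), mem_WW.2 ?_⟩, ?_⟩
      · have : π f = 0 := hf
        simp [hs, this]
      · refine Prod.ext rfl (Subtype.ext ?_)
        change f + s z - s z = f
        simp
  exact (h1.of_equiv hX (LinearEquiv.ofBijective t ht)).fst hX

/-- the presentation obtained from `D` by adding the map `x`. -/
lemma WW_chain (x : R) {J H : Type u} [AddCommGroup J] [Module R J]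
    [AddCommGroup H] [Module R H] [Module.Finite R A] [Module.Projective R A] [Module.Finite R H]
    [Module.Projective R H] (D : A →ₗ[R] H) (q : H →ₗ[R] J) (h : IsSES D q) (m : ℕ) :
    ∀ (Z : ModuleCat.{u} R), IsSyz R m Z (ModuleCat.of R J) → ∃ (F : ModuleCat.{u} R)
      (_ : Module.Finite R F) (_ : Module.Projective R F) (π : F →ₗ[R] Z) (J' : ModuleCat.{u} R)
      (q' : (A × H) →ₗ[R] J'), Function.Surjective π ∧ IsSyz R m (ModuleCat.of R (WW π x)) J' ∧
        IsSES ((x • LinearMap.id).prod D) q' := by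
  induction m with
  | zero =>
    rintro Z ⟨e⟩
    have e : J ≃ₗ[R] Z := e
    let π : H →ₗ[R] Z := e.toLinearMap ∘ₗ q
    have hπ : IsSES D π := IsSES.mk' (fun a ha => h.1 (by simpa using ha))
      (e.surjective.comp h.2.1) (fun a => by simp [π, h.comp_zero])
      (fun b hb => h.exists_of b (by simpa [π] using hb))
    have hπ0 : ∀ a, π (D a) = 0 := hπ.comp_zero
    refine ⟨ModuleCat.of R H, ‹Module.Finite R H›, ‹Module.Projective R H›, π,
      ModuleCat.of R (WW π x),
      (((-D).coprod (x • LinearMap.id)).prod (π ∘ₗ LinearMap.snd R A H)).codRestrict (WW π x) ?_,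
      hπ.2.1, ⟨LinearEquiv.refl R _⟩, ?_⟩
    · rintro ⟨a, b⟩
      refine mem_WW.2 ?_
      simp [hπ0]
    · refine IsSES.mk' ?_ ?_ ?_ ?_
      · intro a ha
        have : D a = 0 := congrArg Prod.snd ha
        exact h.1 (by simpa using this)
      · rintro ⟨⟨f, z⟩, hz⟩
        have hz' : π f = x • z := mem_WW.1 hz
        obtain ⟨b, rfl⟩ := hπ.2.1 z
        obtain ⟨a, ha⟩ := hπ.exists_of (x • b - f) (by simp [hz'])
        refine ⟨(a, b), ?_⟩
        ext
        · simp [ha]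
        · rfl
      · intro a
        ext
        · simp
        · simp [hπ0]
      · rintro ⟨a, b⟩ e
        have e1 : -D a + x • b = 0 := congrArg (fun w => w.1.1) e
        have e2 : π b = 0 := congrArg (fun w => w.1.2) e
        obtain ⟨c, rfl⟩ := hπ.exists_of b e2
        refine ⟨c, ?_⟩
        have e3 : D (x • c) = D a := by
          rw [map_smul]; exact (neg_add_eq_zero.1 e1).symm
        ext
        · simpa using h.1 e3
        · rfl
  | succ m ih =>
    rintro Z ⟨F, g, K, i, hF1, hF2, hg, hi, hgi, hK⟩
    obtain ⟨F1, hF11, hF12, π1, J', q', hπ1, hJ', hq'⟩ := ih K hK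
    have hs : IsSES i g := ⟨hi, hg, hgi⟩
    have hs0 : ∀ a, g (i a) = 0 := hs.comp_zero
    refine ⟨F, hF1, hF2, g, J', q', hg, ?_, hq'⟩
    let G : (F1 × F) →ₗ[R] WW g x :=
      (((-(i ∘ₗ π1)).coprod (x • LinearMap.id)).prod (g ∘ₗ LinearMap.snd R F1 F)).codRestrict
        (WW g x) (by
        rintro ⟨a, b⟩
        refine mem_WW.2 ?_
        simp [hs0])
    let I : WW π1 x →ₗ[R] (F1 × F) := (LinearMap.id.prodMap i) ∘ₗ (WW π1 x).subtype
    have hIG : IsSES I G := by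
      refine IsSES.mk' ?_ ?_ ?_ ?_
      · rintro ⟨⟨a, k⟩, hk⟩ e
        have e1 : a = 0 := congrArg Prod.fst e
        have e2 : i k = 0 := congrArg Prod.snd e
        have e3 : k = 0 := hi (by simpa using e2)
        subst e1 e3
        rfl
      · rintro ⟨⟨f, z⟩, hz⟩
        have hz' : g f = x • z := mem_WW.1 hz
        obtain ⟨b, rfl⟩ := hg z
        obtain ⟨k, hk⟩ := hs.exists_of (x • b - f) (by simp [hz'])
        obtain ⟨a, rfl⟩ := hπ1 k
        refine ⟨(a, b), ?_⟩
        ext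
        · simp [G, hk]
        · rfl
      · rintro ⟨⟨a, k⟩, hk⟩
        have hk' : π1 a = x • k := mem_WW.1 hk
        ext
        · simp [G, I, hk']
        · simp [G, I, hs0]
      · rintro ⟨a, b⟩ e
        have e1 : -i (π1 a) + x • b = 0 := congrArg (fun w => w.1.1) e
        have e2 : g b = 0 := congrArg (fun w => w.1.2) e
        obtain ⟨k, rfl⟩ := hs.exists_of b e2
        refine ⟨⟨(a, k), mem_WW.2 ?_⟩, rfl⟩
        apply hi
        rw [map_smul]
        exact neg_add_eq_zero.1 e1
    exact ⟨ModuleCat.of R (F1 × F), G, ModuleCat.of R (WW π1 x), I,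
      inferInstanceAs (Module.Finite R (F1 × F)), inferInstanceAs (Module.Projective R (F1 × F)),
      hIG.2.1, hIG.1, hIG.2.2, hJ'⟩

end Wsec

section Hatsec
set_option linter.unusedSectionVars false

variable {R : Type u} [CommRing R] [IsLocalRing R]
variable {A B C : Type u} [AddCommGroup A] [Module R A]
    [AddCommGroup B] [Module R B] [AddCommGroup C] [Module R C]

/-- equivalence for membership in resolving subcategories. -/
def Rel (Z Z' : ModuleCat.{u} R) : Prop :=
  ∀ 𝒳 : Set (ModuleCat.{u} R), IsResolving R 𝒳 → (Z ∈ 𝒳 ↔ Z' ∈ 𝒳)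

lemma IsSyz.of_equiv (m : ℕ) {J J' : ModuleCat.{u} R} (e : J ≃ₗ[R] J') :
    ∀ Z : ModuleCat.{u} R, IsSyz R m Z J → IsSyz R m Z J' := by
  induction m with
  | zero =>
    rintro Z ⟨t⟩
    exact ⟨e.symm.trans t⟩
  | succ m ih =>
    rintro Z ⟨F, g, K, i, hF1, hF2, hg, hi, hgi, hK⟩
    exact ⟨F, g, K, i, hF1, hF2, hg, hi, hgi, ih K hK⟩

lemma IsSES.coker_equiv {f : A →ₗ[R] B} {g : B →ₗ[R] C} (h : IsSES f g) {C' : Type u}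
    [AddCommGroup C'] [Module R C'] {g' : B →ₗ[R] C'} (h' : IsSES f g') : Nonempty (C ≃ₗ[R] C') := by
  obtain ⟨t, ht⟩ := exists_factor_surj h.2.1 g' (fun b hb => by
    obtain ⟨a, rfl⟩ := h.exists_of b hb
    exact h'.comp_zero a)
  refine ⟨LinearEquiv.ofBijective t ⟨(injective_iff_map_eq_zero t).2 fun c hc => ?_, fun c => ?_⟩⟩
  · obtain ⟨b, rfl⟩ := h.2.1 c
    rw [ht] at hc
    obtain ⟨a, rfl⟩ := h'.exists_of b hc
    exact h.comp_zero a
  · obtain ⟨b, rfl⟩ := h'.2.1 c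
    exact ⟨g b, ht b⟩

lemma IsSyz.Q [IsNoetherianRing R] {J : ModuleCat.{u} R} (m : ℕ) :
    ∀ Z : ModuleCat.{u} R, IsSyz R m Z J → Q R (m + 2) Z → Q R 2 J := by
  induction m with
  | zero =>
    rintro Z ⟨e⟩ h
    exact h.of_equiv e.symm
  | succ m ih =>
    rintro Z ⟨F, g, K, i, hF1, hF2, hg, hi, hgi, hK⟩ h
    exact ih K hK (Q.syz ⟨hi, hg, hgi⟩ hF2 h)

lemma exists_syz [IsNoetherianRing R] (m : ℕ) :
    ∀ Z : ModuleCat.{u} R, Q R (m + 2) Z → ∃ J : ModuleCat.{u} R, IsSyz R m Z J ∧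
      (¬ PDL R (m + 1) Z → ¬ PDL R 1 J) := by
  induction m with
  | zero => exact fun Z _ => ⟨Z, ⟨LinearEquiv.refl R _⟩, id⟩
  | succ m ih =>
    intro Z hZ
    have := hZ.fin
    obtain ⟨k, π, hπ⟩ := Module.Finite.exists_fin' R Z
    have hs := ker_ses hπ
    obtain ⟨J, hJ, hJ'⟩ := ih (ModuleCat.of R (LinearMap.ker π)) (Q.syz hs inferInstance hZ)
    exact ⟨J, ⟨ModuleCat.of R (Fin k → R), π, ModuleCat.of R (LinearMap.ker π), _,
      inferInstanceAs (Module.Finite R (Fin k → R)),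
      inferInstanceAs (Module.Projective R (Fin k → R)), hπ, hs.1, hs.2.2, hJ⟩,
      fun h => hJ' fun h' => h (PDL.right_proj hs inferInstance h')⟩

lemma proj_pi [Module.Projective R A] (r : ℕ) : Module.Projective R (Fin r → A) :=
  Module.Projective.of_equiv
    (DFinsupp.linearEquivFunOnFintype (R := R) (ι := Fin r) (M := fun _ => A))

lemma W_iter [IsNoetherianRing R] (m N : ℕ) [Module.Finite R A] [Module.Projective R A]
    [Module.Finite R B] [Module.Projective R B] (d : A →ₗ[R] B) (q : B →ₗ[R] C) (h : IsSES d q)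
    (Z : ModuleCat.{u} R) (hZ : IsSyz R m Z (ModuleCat.of R C)) (hZQ : Q R (N + 1) Z) (r : ℕ) :
    ∀ (x : Fin r → R), (∀ i, x i ∈ IsLocalRing.maximalIdeal R) → ∃ (Z' J' : ModuleCat.{u} R)
      (q' : ((Fin r → A) × B) →ₗ[R] J'), Q R (N + 1) Z' ∧ Rel Z Z' ∧ IsSyz R m Z' J' ∧
        IsSES ((LinearMap.pi fun i : Fin r => x i • (LinearMap.id : A →ₗ[R] A)).prod d) q' := by
  induction r with
  | zero =>
    intro x _
    refine ⟨Z, ModuleCat.of R C, q ∘ₗ LinearMap.snd R _ _, hZQ, fun _ _ => Iff.rfl, hZ, ?_⟩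
    refine IsSES.mk' ?_ ?_ ?_ ?_
    · intro a ha
      have : d a = 0 := congrArg Prod.snd ha
      exact h.1 (by simpa using this)
    · exact h.2.1.comp LinearMap.snd_surjective
    · intro a
      exact h.comp_zero a
    · rintro ⟨w, b⟩ hb
      obtain ⟨a, rfl⟩ := h.exists_of b hb
      exact ⟨a, Prod.ext (Subsingleton.elim _ _) rfl⟩
  | succ r ih =>
    intro x hx
    obtain ⟨Z1, J1, q1, h1, h2, h3, h4⟩ := ih (fun i => x i.succ) (fun i => hx i.succ)
    have : Module.Projective R (Fin r → A) := proj_pi r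
    obtain ⟨F, hF1, hF2, π, J', q', hπ, hs, hq'⟩ := WW_chain (x 0) _ q1 h4 m Z1 h3
    have hrel : Rel Z1 (ModuleCat.of R (WW π (x 0))) := fun 𝒳 hX =>
      WW_mem_iff hX hπ (x 0) (hx 0) h1.lf
    let E : ((Fin (r + 1) → A) × B) →ₗ[R] (A × ((Fin r → A) × B)) :=
      (LinearMap.proj 0 ∘ₗ LinearMap.fst R _ _).prod
        (((LinearMap.pi fun i : Fin r => LinearMap.proj i.succ) ∘ₗ LinearMap.fst R _ _).prod
          (LinearMap.snd R _ _))
    refine ⟨ModuleCat.of R (WW π (x 0)), J', q' ∘ₗ E, ?_, fun 𝒳 hX => (h2 𝒳 hX).trans (hrel 𝒳 hX),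
      hs, ?_⟩
    · exact (hrel _ (Q.resolving N)).1 h1
    · have hE : ∀ a, E (((LinearMap.pi fun i : Fin (r + 1) => x i • (LinearMap.id : A →ₗ[R] A)).prod d) a)
          = (((x 0) • LinearMap.id).prod
            ((LinearMap.pi fun i : Fin r => x i.succ • (LinearMap.id : A →ₗ[R] A)).prod d)) a :=
        fun a => rfl
      refine IsSES.mk' ?_ ?_ ?_ ?_
      · intro a ha
        have : d a = 0 := congrArg Prod.snd ha
        exact h.1 (by simpa using this)
      · intro j
        obtain ⟨⟨a, w, b⟩, rfl⟩ := hq'.2.1 j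
        refine ⟨(Fin.cons a w, b), ?_⟩
        rfl
      · intro a
        rw [LinearMap.comp_apply, hE]
        exact hq'.comp_zero a
      · rintro ⟨w, b⟩ hb
        obtain ⟨a, ha⟩ := hq'.exists_of _ hb
        refine ⟨a, ?_⟩
        have e1 : x 0 • a = w 0 := congrArg (fun p => p.1) ha
        have e2 : (fun i : Fin r => x i.succ • a) = fun i => w i.succ := congrArg (fun p => p.2.1) ha
        have e3 : d a = b := congrArg (fun p => p.2.2) ha
        refine Prod.ext ?_ e3
        funext i
        refine Fin.cases e1 (fun i => congrFun e2 i) i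

/-- The cokernel of `R → R^r` given by `x`. -/
abbrev J0 {r : ℕ} (x : Fin r → R) : Type u := (Fin r → R) ⧸ (Submodule.span R {x})

lemma J0_ses {r a b : ℕ} (x : Fin r → R) (d : (Fin a → R) →ₗ[R] (Fin b → R))
    (D : Fin r → ((Fin a → R) →ₗ[R] (Fin b → R))) (hd : d = ∑ i, x i • D i)
    (hi : Function.Injective d) :
    ∃ σ : ((Fin r → (Fin a → R)) × (Fin b → R)) →ₗ[R] ((Fin a → J0 x) × (Fin b → R)),
      IsSES ((LinearMap.pi fun i : Fin r =>
        x i • (LinearMap.id : (Fin a → R) →ₗ[R] (Fin a → R))).prod d) σ := by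
  let T : (Fin a) → (Fin r → (Fin a → R)) →ₗ[R] (Fin r → R) := fun j =>
    LinearMap.pi fun i => LinearMap.proj j ∘ₗ LinearMap.proj i
  let S : (Fin r → (Fin a → R)) →ₗ[R] (Fin b → R) := ∑ i, D i ∘ₗ LinearMap.proj i
  have hS : ∀ w, S w = ∑ i, D i (w i) := fun w => by simp [S, LinearMap.sum_apply]
  have hSx : ∀ v : Fin a → R, S (fun i => x i • v) = d v := fun v => by
    simp [hS, hd, LinearMap.sum_apply]
  let σ : ((Fin r → (Fin a → R)) × (Fin b → R)) →ₗ[R] ((Fin a → J0 x) × (Fin b → R)) :=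
    ((LinearMap.pi fun j => (Submodule.span R {x}).mkQ ∘ₗ T j) ∘ₗ LinearMap.fst R _ _).prod
      (LinearMap.snd R _ _ - S ∘ₗ LinearMap.fst R _ _)
  have hσ : ∀ w g, σ (w, g) = (fun j => Submodule.Quotient.mk (fun i => w i j), g - S w) :=
    fun w g => rfl
  refine ⟨σ, IsSES.mk' ?_ ?_ ?_ ?_⟩
  · intro a ha
    have : d a = 0 := congrArg Prod.snd ha
    exact hi (by simpa using this)
  · rintro ⟨u, g⟩
    choose v hv using fun j => Submodule.mkQ_surjective _ (u j)
    refine ⟨(fun i j => v j i, g + S fun i j => v j i), ?_⟩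
    rw [hσ]
    refine Prod.ext ?_ (by simp)
    funext j
    exact hv j
  · intro v
    change σ (fun i => x i • v, d v) = 0
    rw [hσ, hSx]
    refine Prod.ext ?_ (by simp)
    funext j
    refine (Submodule.Quotient.mk_eq_zero _).2 (Submodule.mem_span_singleton.2 ⟨v j, ?_⟩)
    ext i
    simp [mul_comm]
  · rintro ⟨w, g⟩ h
    rw [hσ] at h
    have h1 : ∀ j, ∃ c : R, c • x = fun i => w i j := fun j =>
      Submodule.mem_span_singleton.1 ((Submodule.Quotient.mk_eq_zero _).1
        (congrFun (congrArg Prod.fst h) j))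
    have h2 : g - S w = 0 := congrArg Prod.snd h
    choose v hv using h1
    have hw : w = fun i => x i • v := by
      ext i j
      rw [← congrFun (hv j) i]
      simp [mul_comm]
    refine ⟨v, ?_⟩
    change (fun i => x i • v, d v) = (w, g)
    rw [sub_eq_zero.1 h2, hw, hSx]

lemma exists_hat [IsNoetherianRing R] {r : ℕ} (x : Fin r → R)
    (hx : Ideal.span (Set.range x) = IsLocalRing.maximalIdeal R) (m : ℕ) (Z : ModuleCat.{u} R)
    (hZ : Q R (m + 2) Z) : ∃ (Z' : ModuleCat.{u} R) (a b : ℕ), Q R (m + 2) Z' ∧ Rel Z Z' ∧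
      IsSyz R m Z' (ModuleCat.of R ((Fin a → J0 x) × (Fin b → R))) ∧
      (¬ PDL R (m + 1) Z → a ≠ 0) := by
  obtain ⟨J, hJ, hJ'⟩ := exists_syz m Z hZ
  have hQJ := IsSyz.Q m Z hJ hZ
  have := hQJ.fin
  have hxm : ∀ i, x i ∈ IsLocalRing.maximalIdeal R := fun i => hx ▸ Ideal.subset_span ⟨i, rfl⟩
  obtain ⟨a, b, d, π, D, hd, hD⟩ := exists_min_pres J hQJ.pd x hx
  obtain ⟨Z', J', q', h1, h2, h3, h4⟩ := W_iter m (m + 1) d π hd Z hJ hZ r x hxm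
  obtain ⟨σ, hσ⟩ := J0_ses x d D hD hd.1
  obtain ⟨e⟩ := IsSES.coker_equiv h4 hσ
  refine ⟨Z', a, b, h1, h2, IsSyz.of_equiv m e Z' h3, ?_⟩
  rintro hpd rfl
  exact hJ' hpd (PDL.right hd (PDL_zero_iff.2 inferInstance) (PDL_one_iff.2 inferInstance))

end Hatsec

section Mainsec
set_option linter.unusedSectionVars false

variable {R : Type u} [CommRing R] [IsLocalRing R]
variable {A B C : Type u} [AddCommGroup A] [Module R A]
    [AddCommGroup B] [Module R B] [AddCommGroup C] [Module R C]

lemma Q.pi [IsNoetherianRing R] {n : ℕ} (h : Q R (n + 1) A) (k : ℕ) : Q R (n + 1) (Fin k → A) :=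
  Mem.pi (Q.resolving (R := R) n) (A := A) h k

lemma range_ses {f : A →ₗ[R] B} (hf : Function.Injective f) :
    IsSES f (LinearMap.range f).mkQ :=
  ⟨hf, Submodule.mkQ_surjective _, by simp⟩

/-- one step of the construction. -/
lemma up_step [IsNoetherianRing R] {m a g : ℕ} {S K L G F Z : Type u}
    [AddCommGroup S] [Module R S] [AddCommGroup K] [Module R K] [AddCommGroup L] [Module R L]
    [AddCommGroup G] [Module R G] [AddCommGroup F] [Module R F] [AddCommGroup Z] [Module R Z]
    [Module.Finite R G] [Module.Projective R G] [Module.Finite R F] [Module.Projective R F]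
    (φ : S →ₗ[R] (Fin g → R)) (hφ : IsApprox φ) (hφi : Function.Injective φ)
    (hS' : Q R (m + 3) ((Fin g → R) ⧸ LinearMap.range φ)) (hZ : Q R (m + 3) Z)
    (hL : Q R m L) {f : L →ₗ[R] ((Fin a → S) × G)} {β : ((Fin a → S) × G) →ₗ[R] K}
    (hβ : IsSES f β) {i : K →ₗ[R] F} {π : F →ₗ[R] Z} (hπ : IsSES i π) :
    ∃ T : ((Fin a → ((Fin g → R) ⧸ LinearMap.range φ)) × F) →ₗ[R] Z,
      Function.Surjective T ∧ Q R (m + 1) (LinearMap.ker T) := by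
  have hpi0 : ∀ k, π (i k) = 0 := hπ.comp_zero
  have hΦ := IsApprox.prodPi (C := G) hφ a
  set Φ : ((Fin a → S) × G) →ₗ[R] ((Fin a → (Fin g → R)) × G) :=
    ((LinearMap.pi fun i : Fin a => φ ∘ₗ LinearMap.proj i).prodMap (LinearMap.id : G →ₗ[R] G)) with hΦdef
  have hΦi : Function.Injective Φ := by
    rintro ⟨s, c⟩ ⟨s', c'⟩ e
    have e1 : (fun j => φ (s j)) = fun j => φ (s' j) := congrArg Prod.fst e
    have e2 : c = c' := congrArg Prod.snd e
    refine Prod.ext (funext fun j => hφi (congrFun e1 j)) e2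
  obtain ⟨e, he⟩ := hΦ.extend (i ∘ₗ β)
  let γ : ((Fin a → (Fin g → R)) × G) →ₗ[R] (Fin a → ((Fin g → R) ⧸ LinearMap.range φ)) :=
    (LinearMap.pi fun j => (LinearMap.range φ).mkQ ∘ₗ LinearMap.proj j) ∘ₗ LinearMap.fst R _ _
  have hγs : Function.Surjective γ := by
    intro u
    choose v hv using fun j => Submodule.mkQ_surjective _ (u j)
    exact ⟨(v, 0), funext hv⟩
  have hγΦ : ∀ b, γ (Φ b) = 0 := by
    rintro ⟨s, c⟩
    funext j
    exact (Submodule.Quotient.mk_eq_zero _).2 ⟨s j, rfl⟩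
  have hγk : ∀ y, γ y = 0 → ∃ b, Φ b = y := by
    rintro ⟨u, c⟩ h
    have h1 : ∀ j, ∃ s, φ s = u j := fun j =>
      (Submodule.Quotient.mk_eq_zero (LinearMap.range φ)).1 (congrFun h j)
    choose s hs using h1
    exact ⟨(s, c), Prod.ext (funext hs) rfl⟩
  obtain ⟨t, ht⟩ := exists_factor_surj hγs (π ∘ₗ e) (fun y hy => by
    obtain ⟨b, rfl⟩ := hγk y hy
    simp [he, hpi0])
  let T : ((Fin a → ((Fin g → R) ⧸ LinearMap.range φ)) × F) →ₗ[R] Z := t.coprod π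
  have hT : ∀ s f, T (s, f) = t s + π f := fun s f => by simp [T]
  have hTs : Function.Surjective T := fun z => by
    obtain ⟨f, rfl⟩ := hπ.2.1 z
    exact ⟨(0, f), by simp [hT]⟩
  have hker := ker_ses hTs
  have hQ : Q R (m + 3) ((Fin a → ((Fin g → R) ⧸ LinearMap.range φ)) × F) :=
    Q.prod (Q.pi hS' a) (Q.of_proj _)
  have := hQ.fin
  refine ⟨T, hTs, inferInstance, ?_, LF.ker hker hQ.lf hZ.lf⟩
  let κ : ((Fin a → (Fin g → R)) × G) →ₗ[R] LinearMap.ker T := (γ.prod (-e)).codRestrict _ (fun y => by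
    change T (γ y, -e y) = 0
    rw [hT, ht]
    simp)
  have hκ : IsSES (Φ ∘ₗ f) κ := by
    refine IsSES.mk' ?_ ?_ ?_ ?_
    · intro l hl
      exact hβ.1 (hΦi (by simpa using hl))
    · rintro ⟨⟨s, w⟩, hw⟩
      have hw' : t s + π w = 0 := (hT s w).symm.trans hw
      obtain ⟨y, rfl⟩ := hγs s
      rw [ht, LinearMap.comp_apply, ← map_add] at hw'
      obtain ⟨k, hk⟩ := hπ.exists_of _ hw'
      obtain ⟨b, rfl⟩ := hβ.2.1 k
      have hb := he b
      rw [LinearMap.comp_apply, hk] at hb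
      refine ⟨y - Φ b, Subtype.ext (Prod.ext ?_ ?_)⟩
      · change γ (y - Φ b) = γ y
        rw [map_sub, hγΦ, sub_zero]
      · change -e (y - Φ b) = w
        rw [map_sub, hb]
        abel
    · intro l
      refine Subtype.ext (Prod.ext ?_ ?_)
      · exact hγΦ _
      · change -e (Φ (f l)) = 0
        rw [he, LinearMap.comp_apply, hβ.comp_zero, map_zero, neg_zero]
    · intro y hy
      have h1 : γ y = 0 := congrArg (fun p => p.1.1) hy
      have h2 : -e y = 0 := congrArg (fun p => p.1.2) hy
      obtain ⟨b, rfl⟩ := hγk y h1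
      rw [he] at h2
      have h3 : β b = 0 := hπ.1 (by simpa using h2)
      obtain ⟨l, rfl⟩ := hβ.exists_of b h3
      exact ⟨l, rfl⟩
  have : Module.Projective R (Fin a → (Fin g → R)) := proj_pi a
  exact PDL.right_proj hκ inferInstance hL.pd

lemma up_lemma [IsNoetherianRing R] (J : ModuleCat.{u} R) (hJ : Q R 2 J) (m : ℕ) :
    (∀ N : ModuleCat.{u} R, Q R (m + 1) N → SF R N) → ∃ S : ModuleCat.{u} R, Q R (m + 2) S ∧
      ∀ (Z : ModuleCat.{u} R) (a : ℕ) (G : ModuleCat.{u} R), Module.Finite R G →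
        Module.Projective R G → Q R (m + 2) Z →
        IsSyz R m Z (ModuleCat.of R ((Fin a → J) × G)) →
        ∃ (G' L : ModuleCat.{u} R) (f : L →ₗ[R] ((Fin a → S) × G'))
          (g : ((Fin a → S) × G') →ₗ[R] Z), Module.Finite R G' ∧ Module.Projective R G' ∧
            Q R m L ∧ IsSES f g := by
  induction m with
  | zero =>
    intro _
    refine ⟨J, hJ, ?_⟩
    rintro Z a G hG1 hG2 hZ ⟨e⟩
    have e : ((Fin a → J) × G) ≃ₗ[R] Z := e
    refine ⟨G, ModuleCat.of R PUnit.{u + 1}, (0 : PUnit.{u + 1} →ₗ[R] _), e.toLinearMap, hG1, hG2,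
      ⟨inferInstanceAs (Module.Finite R PUnit.{u + 1}), PDL_zero_iff.2 (inferInstanceAs (Subsingleton PUnit.{u + 1})),
        LF.of_projective (A := PUnit.{u + 1})⟩, ?_⟩
    refine IsSES.mk' (A := PUnit.{u + 1}) (fun _ _ => rfl) e.surjective (fun _ => by simp) (fun b hb => ⟨0, ?_⟩)
    have hb' : e b = 0 := hb
    exact (e.injective (hb'.trans (map_zero e).symm)).symm
  | succ m ih =>
    intro hSF
    obtain ⟨S, hS, H⟩ := ih (fun N hN => hSF N (hN.mono (by omega)))
    have := hS.fin
    obtain ⟨g, φ, hφ⟩ := exists_approx (R := R) S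
    have hφi : Function.Injective φ := (injective_iff_map_eq_zero φ).2 fun s hs =>
      hφ.inj_of_SF hS.lf (hSF S hS) LinearMap.id Function.injective_id s hs
    have hses := range_ses hφi
    have hS' : Q R (m + 3) ((Fin g → R) ⧸ LinearMap.range φ) :=
      ⟨inferInstance, PDL.right_proj hses inferInstance hS.pd,
        LF.coker hses (fun x hx => hφ.pow hS.lf x hx)⟩
    refine ⟨ModuleCat.of R ((Fin g → R) ⧸ LinearMap.range φ), hS', ?_⟩
    rintro Z a G hG1 hG2 hZ ⟨F, π, K, i, hF1, hF2, hπs, hi, hiπ, hK⟩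
    have hπ : IsSES i π := ⟨hi, hπs, hiπ⟩
    obtain ⟨G', L, f, β, h1, h2, hL, hβ⟩ := H K a G hG1 hG2 (Q.syz hπ hF2 hZ) hK
    obtain ⟨T, hT, hTQ⟩ := up_step φ hφ hφi hS' hZ hL hβ hπ
    exact ⟨F, ModuleCat.of R (LinearMap.ker T), _, T, hF1, hF2, hTQ, ker_ses hT⟩

lemma lemmaC [IsNoetherianRing R] {𝒳 : Set (ModuleCat.{u} R)} (hX : IsResolving R 𝒳) (m : ℕ)
    (hQ : ∀ N : ModuleCat.{u} R, Q R (m + 1) N → N ∈ 𝒳) {f : A →ₗ[R] B} {β : B →ₗ[R] C}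
    (h : IsSES f β) [Module.Finite R B] (hB : LF R B) (hC : LF R C) (hA : Q R m A) (hSF : SF R A)
    (hBX : Mem 𝒳 B) : Mem 𝒳 C := by
  obtain ⟨g, φ, hφ⟩ := exists_approx (R := R) B
  have hi : Function.Injective (φ ∘ₗ f) := (injective_iff_map_eq_zero _).2 fun s hs =>
      hφ.inj_of_SF hB hSF f h.1 s hs
  have hses := range_ses hi
  have hL : Q R (m + 1) ((Fin g → R) ⧸ LinearMap.range (φ ∘ₗ f)) := by
    refine ⟨inferInstance, PDL.right_proj hses inferInstance hA.pd, LF.coker hses fun x hx => ?_⟩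
    obtain ⟨e1, ρ, hρ⟩ := hφ.pow hB x hx
    obtain ⟨e2, s, hs⟩ := hC.lift β h.2.1 x hx
    obtain ⟨q, hq⟩ := exists_factor_ker h (x ^ e2 • LinearMap.id - s ∘ₗ β) (fun b => by simp [hs])
    refine ⟨e1 + e2, q ∘ₗ ρ, fun l => h.1 ?_⟩
    simp [hρ, hq, h.comp_zero, pow_add, mul_smul]
  obtain ⟨t, ht⟩ := exists_factor_surj h.2.1 ((LinearMap.range (φ ∘ₗ f)).mkQ ∘ₗ φ) (fun b hb => by
    obtain ⟨l, rfl⟩ := h.exists_of b hb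
    exact (Submodule.Quotient.mk_eq_zero _).2 ⟨l, rfl⟩)
  have hfin : IsSES (β.prod φ) ((-t).coprod (LinearMap.range (φ ∘ₗ f)).mkQ) := by
    refine IsSES.mk' ?_ ?_ ?_ ?_
    · intro b hb
      have h1 : β b = 0 := congrArg Prod.fst hb
      have h2 : φ b = 0 := congrArg Prod.snd hb
      obtain ⟨l, rfl⟩ := h.exists_of b h1
      have : l = 0 := hi (by simpa using h2)
      simp [this]
    · intro y
      obtain ⟨v, rfl⟩ := Submodule.mkQ_surjective _ y
      exact ⟨(0, v), by simp⟩
    · intro b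
      simp [ht]
    · rintro ⟨c, v⟩ hv
      obtain ⟨b, rfl⟩ := h.2.1 c
      have h1 : (LinearMap.range (φ ∘ₗ f)).mkQ (v - φ b) = 0 := by
        rw [map_sub]
        simp only [LinearMap.coprod_apply, LinearMap.neg_apply, ht, LinearMap.comp_apply] at hv
        rw [← hv]
        abel
      obtain ⟨l, hl⟩ := (Submodule.Quotient.mk_eq_zero _).1 h1
      refine ⟨b + f l, Prod.ext ?_ ?_⟩
      · simp [h.comp_zero]
      · have hl' : φ (f l) = v - φ b := hl
        simp [hl']
  exact (Mem.mid hX hfin hBX (hQ _ hL)).fst hX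

lemma main_claim [IsNoetherianRing R] {𝒳 : Set (ModuleCat.{u} R)} (hX : IsResolving R 𝒳) (n : ℕ) :
    ∀ M : ModuleCat.{u} R, M ∈ 𝒳 → Q R (n + 1) M → (n ≠ 0 → ¬ PDL R n M) →
      ∀ N : ModuleCat.{u} R, Q R (n + 1) N → N ∈ 𝒳 := by
  induction n with
  | zero =>
    intro M _ _ _ N hN
    exact hX.proj_mem N hN.fin (PDL_one_iff.1 hN.pd)
  | succ m ih =>
    intro M hM hMQ hpd N hN
    have hpd := hpd (by omega)
    have hfin := hMQ.fin
    have hQX : ∀ N : ModuleCat.{u} R, Q R (m + 1) N → N ∈ 𝒳 := by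
      obtain ⟨k, π, hπ⟩ := Module.Finite.exists_fin' R M
      have hs := ker_ses hπ
      exact ih (ModuleCat.of R (LinearMap.ker π)) (Mem.syz hX hs hM) (Q.syz hs inferInstance hMQ)
        (fun _ h => hpd (PDL.right_proj hs inferInstance h))
    have hSF : ∀ N : ModuleCat.{u} R, Q R (m + 1) N → SF R N := fun N hN => by
      have := hN.fin
      exact SF_of_pd (m + 1) M hMQ.pd hpd N hN.pd
    obtain ⟨r, x, hx⟩ := exists_max_gens R
    obtain ⟨M', a, b, h1, h2, h3, h4⟩ := exists_hat x hx m M hMQ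
    have ha := h4 hpd
    obtain ⟨a, rfl⟩ := Nat.exists_eq_succ_of_ne_zero ha
    have hJ : Q R 2 (J0 x) := by
      refine Q.retract (B := (Fin (a + 1) → J0 x) × (Fin b → R))
        (LinearMap.inl R _ _ ∘ₗ LinearMap.single R (fun _ => J0 x) 0)
        (LinearMap.proj 0 ∘ₗ LinearMap.fst R _ _) (fun z => by simp) (IsSyz.Q m M' h3 h1)
    obtain ⟨S, hS, H⟩ := up_lemma (ModuleCat.of R (J0 x)) hJ m hSF
    obtain ⟨G', L, f, g, hG1, hG2, hL, hfg⟩ := H M' (a + 1) (ModuleCat.of R (Fin b → R))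
      (inferInstanceAs (Module.Finite R (Fin b → R)))
      (inferInstanceAs (Module.Projective R (Fin b → R))) h1 h3
    have hM' : M' ∈ 𝒳 := (h2 𝒳 hX).1 hM
    have hB : Mem 𝒳 ((Fin (a + 1) → S) × G') :=
      Mem.mid hX hfg (hQX L (hL.mono (by omega))) hM'
    have hSX : Mem 𝒳 S := by
      have hp := hB.fst hX
      exact (hp.of_equiv hX (Fin.consLinearEquiv R (fun _ : Fin (a + 1) => (S : Type u))).symm).fst hX
    obtain ⟨N', a', b', k1, k2, k3, -⟩ := exists_hat x hx m N hN
    obtain ⟨G'', L', f', g', hG1', hG2', hL', hfg'⟩ := H N' a' (ModuleCat.of R (Fin b' → R))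
      (inferInstanceAs (Module.Finite R (Fin b' → R)))
      (inferInstanceAs (Module.Projective R (Fin b' → R))) k1 k3
    have hB' : Q R (m + 2) ((Fin a' → S) × G'') := Q.prod (Q.pi hS a') (Q.of_proj _)
    have hB'X : Mem 𝒳 ((Fin a' → S) × G'') := (hSX.pi hX a').prod hX (Mem.proj hX)
    have := hB'.fin
    have hN' : Mem 𝒳 N' := lemmaC hX m hQX hfg' hB'.lf k1.lf hL' (hSF L' (hL'.mono (by omega))) hB'X
    exact (k2 𝒳 hX).2 hN'

lemma pdim_spec [IsNoetherianRing R] (M : ModuleCat.{u} R) (hfg : Module.Finite R M)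
    (n : ℕ) (hpd : pdim R M = ((n : ℕ∞) : WithBot ℕ∞)) :
    pdLE R n M ∧ (n ≠ 0 → ¬ PDL R n M) := by
  constructor
  · have hne : {x : WithBot ℕ∞ | (x = ⊥ ∧ Subsingleton M) ∨
        ∃ n : ℕ, x = (n : ℕ∞) ∧ pdLE R n M}.Nonempty := by
      by_contra h
      rw [Set.not_nonempty_iff_eq_empty] at h
      unfold pdim at hpd
      rw [h, sInf_empty] at hpd
      exact absurd (WithBot.coe_injective hpd) (by simp)
    have hmem := csInf_mem hne
    change (pdim R M = ⊥ ∧ _) ∨ ∃ n : ℕ, pdim R M = _ ∧ _ at hmem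
    rw [hpd] at hmem
    obtain ⟨h, -⟩ | ⟨k, h, hk⟩ := hmem
    · exact absurd h (WithBot.coe_ne_bot)
    · have : n = k := by exact_mod_cast WithBot.coe_injective h
      exact this ▸ hk
  · intro hn h
    obtain ⟨n, rfl⟩ := Nat.exists_eq_succ_of_ne_zero hn
    have h' := (pdLE_iff n M hfg).2 h
    have hle : pdim R M ≤ ((n : ℕ∞) : WithBot ℕ∞) := sInf_le (Or.inr ⟨n, rfl, h'⟩)
    rw [hpd, WithBot.coe_le_coe] at hle
    have : n + 1 ≤ n := by exact_mod_cast hle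
    omega

end Mainsec

/-- Corollary 2.9: for a module `M ∈ PD_0(R)` over a noetherian local ring,
`res M = PD_0^n(R)` where `n = pd M`. -/
theorem resClosure_eq_PD0n [IsNoetherianRing R] [IsLocalRing R]
    (M : ModuleCat.{u} R) (hfg : Module.Finite R M)
    (hfree : ∀ p : PrimeSpectrum R, p.asIdeal ≠ IsLocalRing.maximalIdeal R →
      Module.Free (Localization.AtPrime p.asIdeal) (LocalizedModule p.asIdeal.primeCompl M))
    (n : ℕ) (hpd : pdim R M = ((n : ℕ∞) : WithBot ℕ∞)) :
    resClosure R {M} = PD0n R n := by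
  obtain ⟨h1, h2⟩ := pdim_spec M hfg n hpd
  have hM : M ∈ PD0n R n := ⟨hfg, h1, hfree⟩
  have hMQ := hM
  rw [PD0n_eq] at hMQ
  apply le_antisymm
  · refine Set.sInter_subset_of_mem ⟨?_, Set.singleton_subset_iff.2 hM⟩
    rw [PD0n_eq]
    exact Q.resolving n
  · intro N hN
    rw [PD0n_eq] at hN
    rintro 𝒳 ⟨hX, hMX⟩
    exact main_claim hX n M (hMX rfl) hMQ h2 N hN

end ResolvPaper
end

section
/- Let R be a commutative noetherian local ring. Let M be a finitely generated R-module of finite projective dimension that is free when localized at every nonmaximal prime, and let N be a finitely generated R-module of finite projective dimension. If pd_R M ≤ pd_R N, then M belongs to res N. -/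
universe u

open CategoryTheory

namespace ResolvPaper

variable (R : Type u) [CommRing R]

section Aux

open CategoryTheory.Abelian

variable {R : Type u} [CommRing R]

/-- The finite free module of rank `c`. -/
abbrev Fr (R : Type u) [CommRing R] (c : ℕ) : ModuleCat.{u} R := ModuleCat.of R (Fin c → R)

/-- The ring as a bundled module. -/
abbrev RR (R : Type u) [CommRing R] : ModuleCat.{u} R := ModuleCat.of R R

instance projFr (c : ℕ) : Projective (Fr R c) :=
  (IsProjective.iff_projective (R := R) (P := Fin c → R)).1 inferInstance

instance projRR : Projective (RR R) :=
  (IsProjective.iff_projective (R := R) (P := R)).1 inferInstance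

/-- Vanishing of `Ext^i(M,R)`. -/
def EVan (M : ModuleCat.{u} R) (i : ℕ) : Prop := ∀ e : Ext M (RR R) i, e = 0

lemma evan_proj (P : ModuleCat.{u} R) [Projective P] (i : ℕ) : EVan P (i+1) :=
  fun e => Ext.eq_zero_of_projective e

lemma evan_free {X : ModuleCat.{u} R} {i : ℕ} (h : EVan X i) (c : ℕ)
    (e : Ext X (Fr R c) i) : e = 0 := by
  have hid : (𝟙 (Fr R c)) = ∑ j : Fin c, (ModuleCat.ofHom (LinearMap.proj j) : Fr R c ⟶ RR R) ≫
      (ModuleCat.ofHom (LinearMap.single R (fun _ => R) j) : RR R ⟶ Fr R c) := by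
    ext x
    simp [← ModuleCat.ofHom_comp]
  rw [← Ext.comp_mk₀_id e, hid, Ext.mk₀_sum, Ext.comp_sum]
  refine Finset.sum_eq_zero fun j _ => ?_
  rw [← Ext.mk₀_comp_mk₀, ← Ext.comp_assoc_of_third_deg_zero, h (e.comp _ _), Ext.zero_comp]

lemma ses_mk {A B C : ModuleCat.{u} R} (f : A ⟶ B) (g : B ⟶ C) (hf : Function.Injective f.hom)
    (hg : Function.Surjective g.hom) (h : LinearMap.range f.hom = LinearMap.ker g.hom) :
    ∃ w : f ≫ g = 0, (ShortComplex.mk f g w).ShortExact := by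
  have w : f ≫ g = 0 := by
    ext x
    have : f.hom x ∈ LinearMap.ker g.hom := h ▸ LinearMap.mem_range_self _ _
    simpa using this
  refine ⟨w, ?_⟩
  have h1 : Mono f := (ModuleCat.mono_iff_injective f).2 hf
  have h2 : Epi g := (ModuleCat.epi_iff_surjective g).2 hg
  exact { exact := (ShortComplex.moduleCat_exact_iff_range_eq_ker _).2 h
          mono_f := h1
          epi_g := h2 }

lemma isSES_of {S : ShortComplex (ModuleCat.{u} R)} (hS : S.ShortExact) :
    IsSES S.f.hom S.g.hom :=
  ⟨hS.moduleCat_injective_f, hS.moduleCat_surjective_g, hS.exact.moduleCat_range_eq_ker⟩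

lemma exists_ker {B C : ModuleCat.{u} R} (g : B ⟶ C) (hg : Function.Surjective g.hom) :
    ∃ (A : ModuleCat.{u} R) (f : A ⟶ B) (w : f ≫ g = 0), (ShortComplex.mk f g w).ShortExact := by
  refine ⟨ModuleCat.of R (LinearMap.ker g.hom), ModuleCat.ofHom (LinearMap.ker g.hom).subtype, ?_⟩
  exact ses_mk _ _ (Submodule.subtype_injective _) hg (by simp)

lemma finite_X1 [IsNoetherianRing R] {S : ShortComplex (ModuleCat.{u} R)} (hS : S.ShortExact)
    (h : Module.Finite R S.X₂) : Module.Finite R S.X₁ :=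
  Module.Finite.of_injective S.f.hom hS.moduleCat_injective_f

lemma finite_X3 {S : ShortComplex (ModuleCat.{u} R)} (hS : S.ShortExact)
    (h : Module.Finite R S.X₂) : Module.Finite R S.X₃ :=
  Module.Finite.of_surjective S.g.hom hS.moduleCat_surjective_g

lemma exists_cover (M : ModuleCat.{u} R) (hM : Module.Finite R M) :
    ∃ (c : ℕ) (g : Fr R c ⟶ M), Function.Surjective g.hom := by
  obtain ⟨c, f, hf⟩ := Module.Finite.exists_fin' R M
  exact ⟨c, ModuleCat.ofHom f, hf⟩

lemma smul_eq_mk_comp {X Y : ModuleCat.{u} R} {n : ℕ} (x : R) (e : Ext X Y n) :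
    (Ext.mk₀ (x • 𝟙 X)).comp e (zero_add n) = x • e := by
  rw [Ext.mk₀_smul, Ext.smul_comp, Ext.mk₀_id_comp]

/-- Ideal of elements annihilating all positive `Ext` out of `W`. -/
def Kill (W : ModuleCat.{u} R) : Ideal R where
  carrier := {x | ∀ (V : ModuleCat.{u} R) (i : ℕ) (e : Ext W V (i+1)), x • e = 0}
  add_mem' := by
    intro a b ha hb V i e
    rw [add_smul, ha, hb, add_zero]
  zero_mem' := by
    intro V i e
    rw [zero_smul]
  smul_mem' := by
    intro c x hx V i e
    rw [smul_eq_mul, mul_smul, hx, smul_zero]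

lemma mem_Kill {W : ModuleCat.{u} R} {x : R} : x ∈ Kill W ↔
    ∀ (V : ModuleCat.{u} R) (i : ℕ) (e : Ext W V (i+1)), x • e = 0 := Iff.rfl

lemma one_mem_Kill (P : ModuleCat.{u} R) [Projective P] : (1 : R) ∈ Kill P := by
  intro V i e
  rw [Ext.eq_zero_of_projective e, smul_zero]

lemma kill_of_factor {W P : ModuleCat.{u} R} [Projective P] (a : W ⟶ P) (b : P ⟶ W) (x : R)
    (h : a ≫ b = x • 𝟙 W) : x ∈ Kill W := by
  intro V i e
  rw [← smul_eq_mk_comp, ← h, ← Ext.mk₀_comp_mk₀_assoc, Ext.eq_zero_of_projective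
    ((Ext.mk₀ b).comp e (zero_add _)), Ext.comp_zero]

lemma kill_X1 {S : ShortComplex (ModuleCat.{u} R)} (hS : S.ShortExact) {y z : R}
    (hy : y ∈ Kill S.X₂) (hz : z ∈ Kill S.X₃) : y * z ∈ Kill S.X₁ := by
  intro V i e
  obtain ⟨x2, hx2⟩ := Ext.contravariant_sequence_exact₁ hS V (z • e) (add_comm 1 (i+1))
    (by rw [Ext.comp_smul]; exact hz V (i+1) _)
  rw [mul_smul, ← hx2, ← Ext.comp_smul, hy, Ext.comp_zero]

lemma kill_X2 {S : ShortComplex (ModuleCat.{u} R)} (hS : S.ShortExact) {y z : R}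
    (hy : y ∈ Kill S.X₁) (hz : z ∈ Kill S.X₃) : y * z ∈ Kill S.X₂ := by
  intro V i e
  obtain ⟨x3, hx3⟩ := Ext.contravariant_sequence_exact₂ hS V (y • e)
    (by rw [Ext.comp_smul]; exact hy V i _)
  rw [mul_comm, mul_smul, ← hx3, ← Ext.comp_smul, hz, Ext.comp_zero]

lemma kill_cosyz {S : ShortComplex (ModuleCat.{u} R)} (hS : S.ShortExact) [Projective S.X₂]
    (h : S.X₂ ⟶ S.X₁) (x : R) (hx : S.f ≫ h = x • 𝟙 _) : x ∈ Kill S.X₃ := by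
  intro V i e
  obtain ⟨x1, hx1⟩ := Ext.contravariant_sequence_exact₃ hS V e
    (Ext.eq_zero_of_projective _) (add_comm 1 i)
  rw [← hx1, ← Ext.comp_smul, ← smul_eq_mk_comp, ← hx, ← Ext.mk₀_comp_mk₀_assoc,
    hS.extClass_comp_assoc]

/-- If `x` kills `Ext^1` out of `W` then `x` factors through any surjection onto `W`. -/
lemma factor_of_kill {S : ShortComplex (ModuleCat.{u} R)} (hS : S.ShortExact) {x : R}
    (hx : x ∈ Kill S.X₃) : ∃ φ : S.X₃ ⟶ S.X₂, φ ≫ S.g = x • 𝟙 _ := by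
  obtain ⟨x2, hx2⟩ := Ext.covariant_sequence_exact₃ S.X₃ hS (Ext.mk₀ (x • 𝟙 S.X₃)) (zero_add 1)
    (by rw [smul_eq_mk_comp]; exact hx _ 0 _)
  obtain ⟨φ, rfl⟩ := Ext.mk₀_bijective _ _ |>.2 x2
  refine ⟨φ, (Ext.mk₀_bijective _ _).1 ?_⟩
  rw [← hx2, Ext.mk₀_comp_mk₀]

/-- Finite projective dimension. -/
def FP (M : ModuleCat.{u} R) : Prop := ∃ d : ℕ, HasProjectiveDimensionLT M d

lemma FP.proj (P : ModuleCat.{u} R) [Projective P] : FP P := ⟨1, inferInstance⟩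

lemma FP.X1 {S : ShortComplex (ModuleCat.{u} R)} (hS : S.ShortExact) (h2 : FP S.X₂)
    (h3 : FP S.X₃) : FP S.X₁ := by
  obtain ⟨a, ha⟩ := h2
  obtain ⟨b, hb⟩ := h3
  exact ⟨a + b, hS.hasProjectiveDimensionLT_X₁ (a+b)
    (hasProjectiveDimensionLT_of_ge _ a _ (by lia)) (hasProjectiveDimensionLT_of_ge _ b _ (by lia))⟩

lemma FP.X2 {S : ShortComplex (ModuleCat.{u} R)} (hS : S.ShortExact) (h2 : FP S.X₁)
    (h3 : FP S.X₃) : FP S.X₂ := by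
  obtain ⟨a, ha⟩ := h2
  obtain ⟨b, hb⟩ := h3
  exact ⟨a + b, hS.hasProjectiveDimensionLT_X₂ (a+b)
    (hasProjectiveDimensionLT_of_ge _ a _ (by lia)) (hasProjectiveDimensionLT_of_ge _ b _ (by lia))⟩

lemma FP.X3 {S : ShortComplex (ModuleCat.{u} R)} (hS : S.ShortExact) (h2 : FP S.X₁)
    (h3 : FP S.X₂) : FP S.X₃ := by
  obtain ⟨a, ha⟩ := h2
  obtain ⟨b, hb⟩ := h3
  exact ⟨a + b + 1, hS.hasProjectiveDimensionLT_X₃ (a+b)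
    (hasProjectiveDimensionLT_of_ge _ a _ (by lia)) (hasProjectiveDimensionLT_of_ge _ b _ (by lia))⟩

/-- dimension shifting for vanishing -/
lemma evan_shift {S : ShortComplex (ModuleCat.{u} R)} (hS : S.ShortExact) [Projective S.X₂]
    (i : ℕ) : EVan S.X₁ (i+1) ↔ EVan S.X₃ (i+2) := by
  constructor
  · intro h e
    obtain ⟨x1, hx1⟩ := Ext.contravariant_sequence_exact₃ hS _ e
      (Ext.eq_zero_of_projective _) (add_comm 1 (i+1))
    rw [← hx1, h x1, Ext.comp_zero]
  · intro h e
    obtain ⟨x2, hx2⟩ := Ext.contravariant_sequence_exact₁ hS _ e (add_comm 1 (i+1)) (h _)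
    rw [← hx2, Ext.eq_zero_of_projective x2, Ext.comp_zero]

/-- A finite module of finite projective dimension, all of whose positive `Ext` into `R` vanish,
is projective. -/
lemma projective_of_evan [IsNoetherianRing R] (M : ModuleCat.{u} R) (hM : Module.Finite R M)
    (hfp : FP M) (h : ∀ i, EVan M (i+1)) : Module.Projective R M := by
  obtain ⟨d, hd⟩ := hfp
  have key : ∀ t i : ℕ, d ≤ i + 1 + t → ∀ V : ModuleCat.{u} R, Module.Finite R V →
      ∀ e : Ext M V (i+1), e = 0 := by
    intro t
    induction t with
    | zero => intro i hi V _ e; exact e.eq_zero_of_hasProjectiveDimensionLT d hi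
    | succ t ih =>
      intro i hi V hV e
      obtain ⟨c, g, hg⟩ := exists_cover V hV
      obtain ⟨K, f, w, hS⟩ := exists_ker g hg
      have hK : Module.Finite R K := finite_X1 hS (inferInstanceAs (Module.Finite R (Fin c → R)))
      obtain ⟨x2, hx2⟩ := Ext.covariant_sequence_exact₃ M hS e rfl
        (ih (i+1) (by lia) K hK _)
      rw [← hx2, evan_free (h i) c x2, Ext.zero_comp]
  obtain ⟨c, g, hg⟩ := exists_cover M hM
  obtain ⟨K, f, w, hS⟩ := exists_ker g hg
  have hK : Module.Finite R K := finite_X1 hS (inferInstanceAs (Module.Finite R (Fin c → R)))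
  obtain ⟨x2, hx2⟩ := Ext.covariant_sequence_exact₃ M hS (Ext.mk₀ (𝟙 M)) (zero_add 1)
    (by rw [Ext.mk₀_id_comp]; exact key d 0 (by lia) K hK _)
  obtain ⟨φ, rfl⟩ := Ext.mk₀_bijective _ _ |>.2 x2
  have hφ : φ ≫ g = 𝟙 M := by
    apply (Ext.mk₀_bijective _ _).1
    rw [← hx2, Ext.mk₀_comp_mk₀]
  refine Module.Projective.of_split (M := Fin c → R) φ.hom g.hom ?_
  have := congrArg ModuleCat.Hom.hom hφ
  simpa using this

end Aux

section Aux2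

open CategoryTheory.Abelian IsLocalRing

variable {R : Type u} [CommRing R]

/-- `Top n Y`: finite module of finite projective dimension whose last nonzero `Ext^i(Y,R)` is
in degree `n`. -/
structure Top (n : ℕ) (Y : ModuleCat.{u} R) : Prop where
  fg : Module.Finite R Y
  fp : FP Y
  ne : ¬ EVan Y n
  van : ∀ i, n < i → EVan Y i

lemma Top.syz [IsNoetherianRing R] {n : ℕ} {S : ShortComplex (ModuleCat.{u} R)}
    (hS : S.ShortExact) [Projective S.X₂] (h2 : Module.Finite R S.X₂) (h : Top (n+2) S.X₃) :
    Top (n+1) S.X₁ where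
  fg := finite_X1 hS h2
  fp := FP.X1 hS (FP.proj _) h.fp
  ne := fun h' => h.ne ((evan_shift hS n).1 h')
  van := by
    intro i hi
    obtain ⟨j, rfl⟩ : ∃ j, i = j + 1 := ⟨i - 1, by lia⟩
    exact (evan_shift hS j).2 (h.van _ (by lia))

/-- `W` is a `j`-th syzygy of `Y`. -/
def Sy : ℕ → ModuleCat.{u} R → ModuleCat.{u} R → Prop
  | 0, Y, W => Y = W
  | j+1, Y, W => ∃ (K : ModuleCat.{u} R) (c : ℕ) (f : K ⟶ Fr R c) (g : Fr R c ⟶ Y)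
      (w : f ≫ g = 0), (ShortComplex.mk f g w).ShortExact ∧ Sy j K W

instance finFr (c : ℕ) : Module.Finite R (Fr R c) := inferInstanceAs (Module.Finite R (Fin c → R))

lemma Top.sy [IsNoetherianRing R] {n : ℕ} (j : ℕ) {Y : ModuleCat.{u} R} (h : Top (n+1+j) Y) :
    ∃ W, Sy j Y W ∧ Top (n+1) W := by
  induction j generalizing Y with
  | zero => exact ⟨Y, rfl, h⟩
  | succ j ih =>
    obtain ⟨c, g, hg⟩ := exists_cover Y h.fg
    obtain ⟨K, f, w, hS⟩ := exists_ker g hg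
    have hK : Top (n + 1 + j) K := by
      have h' : Top ((n + j) + 2) Y := by
        have : n + 1 + (j+1) = n + j + 2 := by lia
        rwa [this] at h
      have := Top.syz hS (finFr c) h'
      have e : n + 1 + j = n + j + 1 := by lia
      rw [e]; exact this
    obtain ⟨W, hW, hT⟩ := ih hK
    exact ⟨W, ⟨K, c, f, g, w, hS, hW⟩, hT⟩

lemma sy_lift (j : ℕ) {Y W : ModuleCat.{u} R} (h : Sy j Y W) :
    ∃ θ : Ext Y W j, ∀ (Z : ModuleCat.{u} R) (a b : ℕ) (hb : a + j = b)
      (_ : ∀ i, a < i → i ≤ b → EVan Z i) (e : Ext Z W b), ∃ e' : Ext Z Y a, e'.comp θ hb = e := by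
  induction j generalizing Y with
  | zero =>
    obtain rfl : Y = W := h
    refine ⟨Ext.mk₀ (𝟙 Y), ?_⟩
    intro Z a b hb _ e
    obtain rfl : a = b := by simpa using hb
    exact ⟨e, Ext.comp_mk₀_id e⟩
  | succ j ih =>
    obtain ⟨K, c, f, g, w, hS, hK⟩ := h
    obtain ⟨θ, hθ⟩ := ih hK
    refine ⟨hS.extClass.comp θ (add_comm 1 j), ?_⟩
    intro Z a b hb hv e
    obtain ⟨e1, he1⟩ := hθ Z (a+1) b (by lia) (fun i h1 h2 => hv i (by lia) h2) e
    obtain ⟨e2, he2⟩ := Ext.covariant_sequence_exact₁ Z hS e1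
      (evan_free (hv (a+1) (by lia) (by lia)) c _) rfl
    refine ⟨e2, ?_⟩
    rw [← he1, ← he2, Ext.comp_assoc]
    lia

lemma comp_coord_zero {X : ModuleCat.{u} R} {i c : ℕ} (I : Ideal R) (e : Ext X (RR R) i)
    (he : ∀ x ∈ I, x • e = 0) (φ : RR R ⟶ Fr R c) (hφ : ∀ j, (φ.hom (1 : R) : Fin c → R) j ∈ I) :
    e.comp (Ext.mk₀ φ) (add_zero i) = 0 := by
  have hid : φ = ∑ j : Fin c, ((φ.hom (1 : R) : Fin c → R) j) •
      (ModuleCat.ofHom (LinearMap.single R (fun _ => R) j) : RR R ⟶ Fr R c) := by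
    apply ModuleCat.hom_ext
    apply LinearMap.ext_ring
    ext k
    simp [Finset.sum_apply, Pi.single_apply]
  rw [hid, Ext.mk₀_sum, Ext.comp_sum]
  refine Finset.sum_eq_zero fun j _ => ?_
  rw [Ext.mk₀_smul, Ext.comp_smul, ← Ext.smul_comp, he _ (hφ j), Ext.zero_comp]

lemma exists_bad_vector [IsLocalRing R] {c1 c0 : ℕ} (f : (Fin c1 → R) →ₗ[R] (Fin c0 → R))
    (h : ¬ ∃ l : (Fin c0 → R) →ₗ[R] (Fin c1 → R), l ∘ₗ f = LinearMap.id) :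
    ∃ (v : Fin c1 → R) (j : Fin c1), IsUnit (v j) ∧ ∀ i, f v i ∈ maximalIdeal R := by
  rw [IsLocalRing.split_injective_iff_lTensor_residueField_injective] at h
  rw [injective_iff_map_eq_zero] at h
  push Not at h
  obtain ⟨a, ha0, ha⟩ := h
  obtain ⟨v, rfl⟩ := TensorProduct.mk_surjective R (Fin c1 → R) (ResidueField R)
    (IsLocalRing.residue_surjective) a
  simp only [TensorProduct.mk_apply, LinearMap.lTensor_tmul] at ha0 ha
  have hm : ∀ (x : R), x ∈ maximalIdeal R ↔ x • (1 : ResidueField R) = 0 := by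
    intro x
    rw [Algebra.smul_def, mul_one]
    exact (IsLocalRing.residue_eq_zero_iff x).symm
  have h1 : ∀ i, f v i ∈ maximalIdeal R := by
    intro i
    have := congrArg (fun t => TensorProduct.rid R (ResidueField R)
      (LinearMap.lTensor (ResidueField R) (LinearMap.proj i : (Fin c0 → R) →ₗ[R] R) t)) ha0
    simp only [LinearMap.lTensor_tmul, TensorProduct.rid_tmul, map_zero, LinearMap.proj_apply]
      at this
    exact (hm _).2 this
  refine ⟨v, ?_⟩
  by_contra hcon
  push Not at hcon
  apply ha
  have hv : ∀ j, v j ∈ maximalIdeal R := by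
    intro j
    by_contra hj
    obtain ⟨i, hi⟩ := hcon j (by simpa using hj)
    exact hi (h1 i)
  have : v = ∑ j, v j • (Pi.single j (1 : R) : Fin c1 → R) := by
    ext k
    simp [Finset.sum_apply, Pi.single_apply]
  rw [this, TensorProduct.tmul_sum]
  refine Finset.sum_eq_zero fun j _ => ?_
  rw [← TensorProduct.smul_tmul, (hm _).1 (hv j), TensorProduct.zero_tmul]

lemma top_one [IsNoetherianRing R] [IsLocalRing R] {W : ModuleCat.{u} R} (h : Top 1 W) :
    ∃ (c1 c0 : ℕ) (f : Fr R c1 ⟶ Fr R c0) (g : Fr R c0 ⟶ W) (w : f ≫ g = 0)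
      (v : RR R ⟶ Fr R c1) (p : Fr R c1 ⟶ RR R), (ShortComplex.mk f g w).ShortExact ∧
      v ≫ p = 𝟙 _ ∧ ∀ j, ((v ≫ f).hom (1 : R) : Fin c0 → R) j ∈ maximalIdeal R := by
  obtain ⟨c, g, hg⟩ := exists_cover W h.fg
  obtain ⟨K, f, w, hS⟩ := exists_ker g hg
  have hKf : Module.Finite R K := finite_X1 hS (finFr c)
  have hKp : Module.Projective R K := projective_of_evan K hKf (FP.X1 hS (FP.proj _) h.fp)
    (fun i => (evan_shift hS i).2 (h.van _ (by lia)))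
  have hKfree : Module.Free R K := Module.free_of_flat_of_isLocalRing
  let b := (Module.finBasis R K).equivFun
  let f' : Fr R (Module.finrank R K) ⟶ Fr R c := ModuleCat.ofHom (f.hom ∘ₗ b.symm.toLinearMap)
  obtain ⟨hi, hs, hr⟩ := isSES_of hS
  obtain ⟨w', hS'⟩ := ses_mk f' g (hi.comp b.symm.injective) hs (by
    rw [← hr]
    exact LinearEquiv.range_comp _ _)
  have hns : ¬ ∃ l : (Fin c → R) →ₗ[R] (Fin (Module.finrank R K) → R),
      l ∘ₗ f'.hom = LinearMap.id := by
    rintro ⟨l, hl⟩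
    apply h.ne
    intro e
    obtain ⟨x1, hx1⟩ := Ext.contravariant_sequence_exact₃ hS' _ e
      (Ext.eq_zero_of_projective _) (add_comm 1 0)
    have : f' ≫ (ModuleCat.ofHom l : Fr R c ⟶ Fr R (Module.finrank R K)) = 𝟙 _ :=
      ModuleCat.hom_ext hl
    rw [← hx1, ← Ext.mk₀_id_comp x1, ← this, ← Ext.mk₀_comp_mk₀_assoc, hS'.extClass_comp_assoc]
  obtain ⟨v, j, hj, hv⟩ := exists_bad_vector f'.hom hns
  obtain ⟨r, hr⟩ := hj.exists_left_inv
  refine ⟨_, c, f', g, w', ModuleCat.ofHom (LinearMap.toSpanSingleton R _ v),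
    ModuleCat.ofHom (r • LinearMap.proj j), hS', ?_, ?_⟩
  · apply ModuleCat.hom_ext
    apply LinearMap.ext_ring
    simpa using hr
  · intro i
    simpa using hv i

/-- The residue field. -/
noncomputable abbrev kk (R : Type u) [CommRing R] [IsLocalRing R] : ModuleCat.{u} R := residueMod R

lemma smul_kk [IsLocalRing R] {V : ModuleCat.{u} R} {i : ℕ} (x : R) (hx : x ∈ maximalIdeal R)
    (e : Ext (kk R) V i) : x • e = 0 := by
  have : (x • 𝟙 (kk R)) = 0 := by
    ext y
    have : x • y = 0 := by
      obtain ⟨z, rfl⟩ := IsLocalRing.residue_surjective y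
      rw [Algebra.smul_def]
      have : algebraMap R (ResidueField R) x = 0 := (IsLocalRing.residue_eq_zero_iff x).2 hx
      rw [this, zero_mul]
    simpa using this
  rw [← smul_eq_mk_comp, this, Ext.mk₀_zero, Ext.zero_comp]

lemma depth_lemma [IsNoetherianRing R] [IsLocalRing R] {n : ℕ} {Y : ModuleCat.{u} R}
    (h : Top n Y) : ∀ t, t < n → EVan (kk R) t := by
  intro t
  induction t using Nat.strong_induction_on with
  | _ t ih =>
  intro htn ξ
  rcases t with _ | s
  · obtain ⟨m, rfl⟩ : ∃ m, n = 0 + 1 + m := ⟨n - 1, by lia⟩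
    obtain ⟨W, -, hW⟩ := h.sy m
    obtain ⟨c1, c0, f, g, w, v, p, hS, hvp, hvm⟩ := top_one hW
    have h0 : (ξ.comp (Ext.mk₀ v) (add_zero 0)).comp (Ext.mk₀ f) (add_zero 0) = 0 := by
      rw [Ext.comp_assoc_of_third_deg_zero, Ext.mk₀_comp_mk₀]
      exact comp_coord_zero (maximalIdeal R) ξ (fun x hx => smul_kk x hx ξ) _ hvm
    have : Mono f := hS.mono_f
    have h1 : ξ.comp (Ext.mk₀ v) (add_zero 0) = 0 :=
      Ext.postcomp_mk₀_injective_of_mono (kk R) f (by simpa using h0)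
    rw [← Ext.comp_mk₀_id ξ, ← hvp, ← Ext.mk₀_comp_mk₀, ← Ext.comp_assoc_of_third_deg_zero, h1,
      Ext.zero_comp]
  · obtain ⟨m, rfl⟩ : ∃ m, n = (s + 1) + 1 + m := ⟨n - (s + 2), by lia⟩
    obtain ⟨Y', -, hY'⟩ := h.sy m
    obtain ⟨c, g0, hg0⟩ := exists_cover Y' hY'.fg
    obtain ⟨K, f0, w0, hS0⟩ := exists_ker g0 hg0
    have hK : Top (0 + 1 + s) K := by
      have := Top.syz hS0 (finFr c) hY'
      have e : 0 + 1 + s = s + 1 := by lia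
      rw [e]; exact this
    obtain ⟨W, hKW, hW⟩ := hK.sy s
    obtain ⟨c1, c0, f, g, w, v, p, hS, hvp, hvm⟩ := top_one hW
    have h0 : (ξ.comp (Ext.mk₀ v) (add_zero _)).comp (Ext.mk₀ f) (add_zero _) = 0 := by
      rw [Ext.comp_assoc_of_third_deg_zero, Ext.mk₀_comp_mk₀]
      exact comp_coord_zero (maximalIdeal R) ξ (fun x hx => smul_kk x hx ξ) _ hvm
    obtain ⟨e1, he1⟩ := Ext.covariant_sequence_exact₁ _ hS _ h0 rfl
    obtain ⟨θ, hθ⟩ := sy_lift s hKW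
    obtain ⟨e2, he2⟩ := hθ (kk R) 0 s (by lia) (fun i _ hi => ih i (by lia) (by lia)) e1
    have : Mono f0 := hS0.mono_f
    have h2 : e2 = 0 := by
      apply Ext.postcomp_mk₀_injective_of_mono (kk R) f0
      rw [map_zero]
      exact evan_free (ih 0 (by lia) (by lia)) c _
    have h1 : ξ.comp (Ext.mk₀ v) (add_zero _) = 0 := by
      rw [← he1, ← he2, h2, Ext.zero_comp, Ext.zero_comp]
    rw [← Ext.comp_mk₀_id ξ, ← hvp, ← Ext.mk₀_comp_mk₀, ← Ext.comp_assoc_of_third_deg_zero, h1,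
      Ext.zero_comp]

end Aux2

section Aux3

open CategoryTheory.Abelian IsLocalRing

variable {R : Type u} [CommRing R]

/-- Finite, finite projective dimension and positive `Ext` killed by a power of the maximal
ideal. -/
structure Nice [IsLocalRing R] (M : ModuleCat.{u} R) : Prop where
  fg : Module.Finite R M
  fp : FP M
  kill : maximalIdeal R ≤ (Kill M).radical

lemma exists_socle (m : Ideal R) {E : Type*} [AddCommGroup E] [Module R E] (e : E) (he : e ≠ 0)
    (N : ℕ) (hN : ∀ x ∈ m ^ N, x • e = 0) : ∃ r : R, r • e ≠ 0 ∧ ∀ x ∈ m, x • r • e = 0 := by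
  induction N generalizing e with
  | zero => exact absurd (by simpa using hN 1 (by simp)) he
  | succ N ih =>
    by_cases h : ∀ x ∈ m ^ N, x • e = 0
    · exact ih e he h
    · push Not at h
      obtain ⟨r, hr, hre⟩ := h
      refine ⟨r, hre, fun x hx => ?_⟩
      rw [smul_smul]
      apply hN
      rw [pow_succ, mul_comm x r]
      exact Ideal.mul_mem_mul hr hx

lemma hom_kk [IsLocalRing R] {Z : ModuleCat.{u} R} (h : ∀ e : Ext (kk R) Z 0, e = 0) (z : Z)
    (hz : ∀ x ∈ maximalIdeal R, x • z = 0) : z = 0 := by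
  let φ : (R ⧸ maximalIdeal R) →ₗ[R] Z :=
    (maximalIdeal R).liftQ (LinearMap.toSpanSingleton R Z z) (fun x hx => by
      rw [LinearMap.mem_ker, LinearMap.toSpanSingleton_apply]; exact hz x hx)
  let φ' : kk R ⟶ Z := ModuleCat.ofHom (X := ResidueField R) φ
  have h0 : φ' = 0 := by
    apply (Ext.mk₀_bijective _ _).1
    rw [h (Ext.mk₀ φ'), Ext.mk₀_zero]
  have h1 : φ (Submodule.Quotient.mk 1) = 0 := by
    change φ'.hom (Submodule.Quotient.mk 1 : R ⧸ maximalIdeal R) = 0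
    rw [h0]; rfl
  rwa [Submodule.liftQ_apply, LinearMap.toSpanSingleton_apply, one_smul] at h1

lemma Nice.pow [IsNoetherianRing R] [IsLocalRing R] {M : ModuleCat.{u} R} (h : Nice M) :
    ∃ N, maximalIdeal R ^ N ≤ Kill M := by
  obtain ⟨N, hN⟩ := Ideal.exists_radical_pow_le_of_fg (Kill M) (IsNoetherian.noetherian _)
  exact ⟨N, (Ideal.pow_right_mono h.kill N).trans hN⟩

lemma exists_approx_s13 [IsNoetherianRing R] (Z : ModuleCat.{u} R) (hZ : Module.Finite R Z) :
    ∃ (c : ℕ) (f : Z ⟶ Fr R c), ∀ φ : Z ⟶ RR R, ∃ ψ : Fr R c ⟶ RR R, f ≫ ψ = φ := by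
  obtain ⟨d, g, hg⟩ := exists_cover Z hZ
  have : Module.Finite R ((Fin d → R) →ₗ[R] R) := Module.Finite.linearMap _ _ _ _
  have : Module.Finite R (Z →ₗ[R] R) := Module.Finite.of_injective
    (LinearMap.lcomp R R g.hom) (fun a b hab => by
      ext z
      obtain ⟨y, rfl⟩ := hg z
      exact congrArg (fun t => t y) hab)
  obtain ⟨c, s, hs⟩ := Module.Finite.exists_fin (R := R) (M := Z →ₗ[R] R)
  refine ⟨c, ModuleCat.ofHom (LinearMap.pi s), fun φ => ?_⟩
  have : φ.hom ∈ Submodule.span R (Set.range s) := hs ▸ Submodule.mem_top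
  obtain ⟨a, ha⟩ := (Submodule.mem_span_range_iff_exists_fun R).1 this
  refine ⟨ModuleCat.ofHom (∑ i, a i • LinearMap.proj i), ?_⟩
  apply ModuleCat.hom_ext
  ext z
  rw [← ha]
  simp

lemma approx_free {Z : ModuleCat.{u} R} {c : ℕ} (f : Z ⟶ Fr R c)
    (hf : ∀ φ : Z ⟶ RR R, ∃ ψ : Fr R c ⟶ RR R, f ≫ ψ = φ) (d : ℕ) (φ : Z ⟶ Fr R d) :
    ∃ ψ : Fr R c ⟶ Fr R d, f ≫ ψ = φ := by
  choose ψ hψ using fun i : Fin d => hf (φ ≫ ModuleCat.ofHom (LinearMap.proj i))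
  refine ⟨ModuleCat.ofHom (LinearMap.pi fun i => (ψ i).hom), ?_⟩
  apply ModuleCat.hom_ext
  ext z i
  have := congrArg (fun t => t.hom z) (hψ i)
  simpa using this

lemma approx_inj [IsNoetherianRing R] [IsLocalRing R] {Z : ModuleCat.{u} R} (hZ : Nice Z) {c : ℕ}
    (f : Z ⟶ Fr R c) (hf : ∀ φ : Z ⟶ RR R, ∃ ψ : Fr R c ⟶ RR R, f ≫ ψ = φ)
    (hk : ∀ e : Ext (kk R) Z 0, e = 0) : Function.Injective f.hom := by
  obtain ⟨N, hN⟩ := hZ.pow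
  obtain ⟨d, g, hg⟩ := exists_cover Z hZ.fg
  obtain ⟨K, i, w, hS⟩ := exists_ker g hg
  rw [injective_iff_map_eq_zero]
  intro z hz
  by_contra hz0
  obtain ⟨r, hr, hr'⟩ := exists_socle (maximalIdeal R) z hz0 N (by
    intro x hx
    obtain ⟨α, hα⟩ := factor_of_kill hS (hN hx)
    obtain ⟨ψ, rfl⟩ := approx_free f hf d α
    have := congrArg (fun t => t.hom z) hα
    simp only [ModuleCat.hom_comp, LinearMap.comp_apply, ModuleCat.hom_smul, ModuleCat.hom_id,
      LinearMap.smul_apply, LinearMap.id_apply] at this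
    rw [← this, hz, map_zero, map_zero])
  exact hr (hom_kk hk _ hr')

/-- The basic modules `Z_j`. -/
structure IsZ [IsLocalRing R] (j : ℕ) (Z : ModuleCat.{u} R) : Prop where
  nice : Nice Z
  van : ∀ i, i + 1 ≠ j → EVan Z (i+1)
  gen : ∃ ξ : Ext Z (RR R) j, ξ ≠ 0 ∧ (∀ x ∈ maximalIdeal R, x • ξ = 0) ∧ ∀ e, ∃ r : R, e = r • ξ
  univ : ∀ (M : ModuleCat.{u} R) (a b : ℕ) (hab : a + j = b) (e : Ext M (RR R) b),
    (∀ x ∈ maximalIdeal R, x • e = 0) → (∀ i, a < i → i < b → EVan M i) →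
    ∃ (f : Ext M Z a) (η : Ext Z (RR R) j), f.comp η hab = e

lemma exists_coker {A B : ModuleCat.{u} R} (f : A ⟶ B) (hf : Function.Injective f.hom) :
    ∃ (C : ModuleCat.{u} R) (g : B ⟶ C) (w : f ≫ g = 0), (ShortComplex.mk f g w).ShortExact := by
  refine ⟨ModuleCat.of R (B ⧸ LinearMap.range f.hom),
    ModuleCat.ofHom (LinearMap.range f.hom).mkQ, ?_⟩
  exact ses_mk _ _ hf (Submodule.mkQ_surjective _) (by simp)

lemma exists_Z [IsNoetherianRing R] [IsLocalRing R] {n : ℕ} (hn : ∀ t, t < n → EVan (kk R) t)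
    (j : ℕ) (hj : j + 1 ≤ n) :
    ∃ Z : ModuleCat.{u} R, IsZ (j+1) Z ∧ ∀ a, a + (j + 1) < n → ∀ e : Ext (kk R) Z a, e = 0 := by
  induction j with
  | zero =>
    obtain ⟨c, s, hs⟩ := Submodule.fg_iff_exists_fin_generating_family.1
      (IsNoetherian.noetherian (maximalIdeal R))
    have hsm : ∀ i, s i ∈ maximalIdeal R := fun i => hs ▸ Submodule.subset_span ⟨i, rfl⟩
    let f : RR R ⟶ Fr R c := ModuleCat.ofHom (LinearMap.toSpanSingleton R _ s)
    have hf : Function.Injective f.hom := by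
      rw [injective_iff_map_eq_zero]
      intro r hr
      refine hom_kk (Z := RR R) (hn 0 (by lia)) r ?_
      intro x hx
      rw [← hs] at hx
      have hr' : ∀ i, r * s i = 0 := fun i => congrFun hr i
      obtain ⟨a, rfl⟩ := (Submodule.mem_span_range_iff_exists_fun R).1 hx
      change (∑ i, a i * s i) * r = 0
      rw [Finset.sum_mul]
      exact Finset.sum_eq_zero fun i _ => by rw [mul_assoc, mul_comm (s i), hr', mul_zero]
    obtain ⟨Z, g, w, hS⟩ := exists_coker f hf
    have hkill : ∀ x ∈ maximalIdeal R, x ∈ Kill Z := by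
      intro x hx
      rw [← hs] at hx
      obtain ⟨a, rfl⟩ := (Submodule.mem_span_range_iff_exists_fun R).1 hx
      refine kill_cosyz hS (ModuleCat.ofHom (∑ i, a i • LinearMap.proj i)) _ ?_
      apply ModuleCat.hom_ext
      apply LinearMap.ext_ring
      simp [f]
    refine ⟨Z, ⟨⟨finite_X3 hS (finFr c), FP.X3 hS (FP.proj _) (FP.proj _),
      fun x hx => Ideal.le_radical (hkill x hx)⟩, ?_, ?_, ?_⟩, ?_⟩
    · intro i hi
      obtain ⟨i, rfl⟩ : ∃ k, i = k + 1 := ⟨i - 1, by lia⟩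
      exact (evan_shift hS i).1 (evan_proj _ i)
    · refine ⟨hS.extClass, ?_, ?_, ?_⟩
      · intro h0
        obtain ⟨x2, hx2⟩ := Ext.contravariant_sequence_exact₁ hS _ (Ext.mk₀ (𝟙 (RR R)))
          (add_comm 1 0) (by rw [h0, Ext.zero_comp])
        obtain ⟨l, rfl⟩ := (Ext.mk₀_bijective _ _).2 x2
        have hl : f ≫ l = 𝟙 _ := by
          apply (Ext.mk₀_bijective _ _).1
          rw [← hx2, Ext.mk₀_comp_mk₀]
        have h1 : l.hom (f.hom (1 : R)) = (1 : R) := by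
          have := congrArg (fun t => t.hom (1 : R)) hl
          simpa using this
        have hmem : l.hom (f.hom (1 : R)) ∈ maximalIdeal R := by
          have : f.hom (1 : R) = ∑ i, s i • (Pi.single i (1 : R) : Fin c → R) := by
            ext k
            simp [f, Finset.sum_apply, Pi.single_apply]
          rw [this, map_sum]
          refine Ideal.sum_mem _ fun i _ => ?_
          rw [map_smul]
          exact Ideal.mul_mem_right _ _ (hsm i)
        rw [h1] at hmem
        exact (Ideal.ne_top_iff_one _).1 (Ideal.IsPrime.ne_top inferInstance) hmem
      · intro x hx
        exact hkill x hx _ 0 _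
      · intro e
        obtain ⟨x1, hx1⟩ := Ext.contravariant_sequence_exact₃ hS _ e
          (Ext.eq_zero_of_projective _) (add_comm 1 0)
        obtain ⟨l, rfl⟩ := (Ext.mk₀_bijective _ _).2 x1
        refine ⟨l.hom (1 : R), ?_⟩
        have : l = (l.hom (1 : R) : R) • 𝟙 (RR R) := by
          apply ModuleCat.hom_ext
          apply LinearMap.ext_ring
          simp
        rw [← hx1]
        conv_lhs => rw [this]
        rw [Ext.mk₀_smul, Ext.comp_smul, Ext.comp_mk₀_id]
    · intro M a b hab e he _
      obtain ⟨x, hx⟩ := Ext.covariant_sequence_exact₁ M hS e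
        (comp_coord_zero _ e he f (by intro i; simpa [f] using hsm i)) hab
      exact ⟨x, hS.extClass, hx⟩
    · intro a ha e
      obtain ⟨x, hx⟩ := Ext.covariant_sequence_exact₃ _ hS e rfl (hn _ ha _)
      rw [← hx, evan_free (hn a (by lia)) c x, Ext.zero_comp]
  | succ j ih =>
    obtain ⟨Z, hZ, hZk⟩ := ih (by lia)
    obtain ⟨c, f, happ⟩ := exists_approx_s13 Z hZ.nice.fg
    have hf := approx_inj hZ.nice f happ (hZk 0 (by lia))
    obtain ⟨Z', g, w, hS⟩ := exists_coker f hf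
    obtain ⟨d, g0, hg0⟩ := exists_cover Z hZ.nice.fg
    obtain ⟨K0, i0, w0, hS0⟩ := exists_ker g0 hg0
    have hkill : Kill Z ≤ Kill Z' := by
      intro x hx
      obtain ⟨α, hα⟩ := factor_of_kill hS0 hx
      obtain ⟨ψ, rfl⟩ := approx_free f happ d α
      exact kill_cosyz hS (ψ ≫ g0) x (by simpa using hα)
    refine ⟨Z', ⟨⟨finite_X3 hS (finFr c), FP.X3 hS hZ.nice.fp (FP.proj _),
      hZ.nice.kill.trans (Ideal.radical_mono hkill)⟩, ?_, ?_, ?_⟩, ?_⟩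
    · intro i hi
      rcases i with _ | i
      · intro e
        obtain ⟨x1, hx1⟩ := Ext.contravariant_sequence_exact₃ hS _ e
          (Ext.eq_zero_of_projective _) (add_comm 1 0)
        obtain ⟨φ, rfl⟩ := (Ext.mk₀_bijective _ _).2 x1
        obtain ⟨ψ, rfl⟩ := happ φ
        rw [← hx1, ← Ext.mk₀_comp_mk₀, hS.extClass_comp_assoc]
      · exact (evan_shift hS i).1 (hZ.van i (by lia))
    · obtain ⟨ξ, h0, hm, hg⟩ := hZ.gen
      refine ⟨hS.extClass.comp ξ (add_comm 1 (j+1)), ?_, ?_, ?_⟩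
      · intro h
        obtain ⟨x2, hx2⟩ := Ext.contravariant_sequence_exact₁ hS _ ξ (add_comm 1 (j+1)) h
        apply h0
        rw [← hx2, Ext.eq_zero_of_projective x2, Ext.comp_zero]
      · intro x hx
        rw [← Ext.comp_smul, hm x hx, Ext.comp_zero]
      · intro e
        obtain ⟨x1, hx1⟩ := Ext.contravariant_sequence_exact₃ hS _ e
          (Ext.eq_zero_of_projective _) (add_comm 1 (j+1))
        obtain ⟨r, rfl⟩ := hg x1
        exact ⟨r, by rw [← hx1, Ext.comp_smul]⟩
    · intro M a b hab e he hv
      obtain ⟨f', η, hη⟩ := hZ.univ M (a+1) b (by lia) e he (fun i h1 h2 => hv i (by lia) h2)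
      obtain ⟨x, hx⟩ := Ext.covariant_sequence_exact₁ M hS f'
        (evan_free (hv (a+1) (by lia) (by lia)) c _) rfl
      refine ⟨x, hS.extClass.comp η (add_comm 1 (j+1)), ?_⟩
      rw [← hη, ← hx, Ext.comp_assoc]
      lia
    · intro a ha e
      obtain ⟨x, hx⟩ := Ext.covariant_sequence_exact₃ _ hS e rfl (hZk (a+1) (by lia) _)
      rw [← hx, evan_free (hn a (by lia)) c x, Ext.zero_comp]

end Aux3

section Aux4

open CategoryTheory.Abelian IsLocalRing

variable {R : Type u} [CommRing R]

/-- `Z ⊕ R^c`. -/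
abbrev BB (Z : ModuleCat.{u} R) (c : ℕ) : ModuleCat.{u} R := ModuleCat.of R (Z × (Fin c → R))

/-- The inclusion of `Z` into `Z ⊕ R^c`. -/
abbrev bin (Z : ModuleCat.{u} R) (c : ℕ) : Z ⟶ BB Z c := ModuleCat.ofHom (LinearMap.inl R _ _)

/-- The projection of `Z ⊕ R^c` to `Z`. -/
abbrev bfst (Z : ModuleCat.{u} R) (c : ℕ) : BB Z c ⟶ Z := ModuleCat.ofHom (LinearMap.fst R _ _)

/-- The projection of `Z ⊕ R^c` to `R^c`. -/
abbrev bsnd (Z : ModuleCat.{u} R) (c : ℕ) : BB Z c ⟶ Fr R c :=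
  ModuleCat.ofHom (LinearMap.snd R _ _)

lemma bin_bfst (Z : ModuleCat.{u} R) (c : ℕ) : bin Z c ≫ bfst Z c = 𝟙 Z := by
  ext z
  simp

lemma bses (Z : ModuleCat.{u} R) (c : ℕ) :
    ∃ w : bin Z c ≫ bsnd Z c = 0, (ShortComplex.mk (bin Z c) (bsnd Z c) w).ShortExact :=
  ses_mk _ _ LinearMap.inl_injective LinearMap.snd_surjective (LinearMap.range_inl R _ _)

lemma surjectify {Z Y : ModuleCat.{u} R} (f : Z ⟶ Y) (hY : Module.Finite R Y) :
    ∃ (c : ℕ) (p : BB Z c ⟶ Y), Function.Surjective p.hom ∧ bin Z c ≫ p = f := by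
  obtain ⟨c, g, hg⟩ := exists_cover Y hY
  refine ⟨c, ModuleCat.ofHom (LinearMap.coprod f.hom g.hom), ?_, ?_⟩
  · intro y
    obtain ⟨x, rfl⟩ := hg y
    exact ⟨(0, x), by simp⟩
  · ext z
    simp

lemma bin_inj {Z V : ModuleCat.{u} R} {c i : ℕ} (e e' : Ext (BB Z c) V (i+1))
    (h : (Ext.mk₀ (bin Z c)).comp e (zero_add _) = (Ext.mk₀ (bin Z c)).comp e' (zero_add _)) :
    e = e' := by
  obtain ⟨w, hS⟩ := bses Z c
  obtain ⟨x, hx⟩ := Ext.contravariant_sequence_exact₂ hS V (e - e') (by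
    rw [sub_eq_add_neg, Ext.comp_add, Ext.comp_neg, ← sub_eq_add_neg, sub_eq_zero]; exact h)
  have : e - e' = 0 := by rw [← hx, Ext.eq_zero_of_projective x, Ext.comp_zero]
  exact sub_eq_zero.1 this

lemma bin_bfst_comp {Z V : ModuleCat.{u} R} {c i : ℕ} (e : Ext Z V i) :
    (Ext.mk₀ (bin Z c)).comp ((Ext.mk₀ (bfst Z c)).comp e (zero_add _)) (zero_add _) = e := by
  rw [Ext.mk₀_comp_mk₀_assoc, bin_bfst, Ext.mk₀_id_comp]

lemma evan_B {Z : ModuleCat.{u} R} {i : ℕ} (c : ℕ) (h : EVan Z (i+1)) : EVan (BB Z c) (i+1) := by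
  intro e
  apply bin_inj
  exact (h _).trans (h _).symm

lemma nice_B [IsLocalRing R] {Z : ModuleCat.{u} R} (c : ℕ) (h : Nice Z) : Nice (BB Z c) := by
  obtain ⟨w, hS⟩ := bses Z c
  have := h.fg
  refine ⟨inferInstanceAs (Module.Finite R (Z × (Fin c → R))), FP.X2 hS h.fp (FP.proj _), ?_⟩
  refine h.kill.trans (Ideal.radical_mono fun x hx => ?_)
  have := kill_X2 hS hx (one_mem_Kill (Fr R c))
  rwa [mul_one] at this

lemma nice_X1 [IsNoetherianRing R] [IsLocalRing R] {S : ShortComplex (ModuleCat.{u} R)}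
    (hS : S.ShortExact) (h2 : Nice S.X₂) (h3 : Nice S.X₃) : Nice S.X₁ := by
  refine ⟨finite_X1 hS h2.fg, FP.X1 hS h2.fp h3.fp, ?_⟩
  have : Kill S.X₂ * Kill S.X₃ ≤ Kill S.X₁ :=
    Ideal.mul_le.2 fun y hy z hz => kill_X1 hS hy hz
  refine le_trans ?_ (Ideal.radical_mono this)
  rw [Ideal.radical_mul]
  exact le_inf h2.kill h3.kill

lemma filt [IsNoetherianRing R] [IsLocalRing R] {𝒳 : Set (ModuleCat.{u} R)}
    (hX : IsResolving R 𝒳) (J : ℕ) (hZ : ∀ i < J, ∃ Z, IsZ (i+1) Z ∧ Z ∈ 𝒳) (d : ℕ) :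
    ∀ j, j + d = J → ∀ M : ModuleCat.{u} R, Nice M → (∀ i < j, EVan M (i+1)) →
      (∀ i, J ≤ i → EVan M (i+1)) → M ∈ 𝒳 := by
  induction d with
  | zero =>
    intro j hj M hM h1 h2
    refine hX.proj_mem M hM.fg (projective_of_evan M hM.fg hM.fp fun i => ?_)
    by_cases h : i < j
    · exact h1 i h
    · exact h2 i (by lia)
  | succ d ih =>
    intro j hj M0 hM0 h01 h02
    obtain ⟨Z, hZ, hZX⟩ := hZ j (by lia)
    have := hM0.fg
    have key : ∀ (K : Submodule R (Ext M0 (RR R) (j+1))) (M : ModuleCat.{u} R)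
        (π : Ext M0 (RR R) (j+1) →ₗ[R] Ext M (RR R) (j+1)), Function.Surjective π →
        LinearMap.ker π = K → Nice M → (∀ i < j, EVan M (i+1)) →
        (∀ i, J ≤ i → EVan M (i+1)) → M ∈ 𝒳 := by
      intro K
      induction K using WellFoundedGT.induction with
      | _ K ihK =>
      intro M π hπ hK hM h1 h2
      by_cases hE : EVan M (j+1)
      · refine ih (j+1) (by lia) M hM (fun i hi => ?_) h2
        rcases Nat.lt_succ_iff_lt_or_eq.1 hi with h | rfl
        · exact h1 i h
        · exact hE
      · simp only [EVan, not_forall] at hE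
        obtain ⟨e1, he1⟩ := hE
        obtain ⟨N, hN⟩ := hM.pow
        obtain ⟨r, hr0, hrm⟩ := exists_socle (maximalIdeal R) e1 he1 N
          (fun x hx => hN hx _ _ e1)
        obtain ⟨f, η, hη⟩ := hZ.univ M 0 (j+1) (zero_add _) (r • e1) hrm (by
          intro i hi1 hi2
          obtain ⟨i, rfl⟩ : ∃ k, i = k + 1 := ⟨i - 1, by lia⟩
          exact h1 i (by lia))
        obtain ⟨f, rfl⟩ := (Ext.mk₀_bijective _ _).2 f
        obtain ⟨c, p, hp, hpf⟩ := surjectify f hZ.nice.fg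
        obtain ⟨M', ι, w, hS⟩ := exists_ker p hp
        -- compatibility
        have hpe : (Ext.mk₀ p).comp η (zero_add _) =
            (Ext.mk₀ (bfst M c)).comp (r • e1) (zero_add _) := by
          apply bin_inj
          rw [bin_bfst_comp, Ext.mk₀_comp_mk₀_assoc, hpf, hη]
        have hpinj : ∀ ζ : Ext Z (RR R) (j+1), (Ext.mk₀ p).comp ζ (zero_add _) = 0 → ζ = 0 := by
          obtain ⟨ξ, hξ0, hξm, hξg⟩ := hZ.gen
          intro ζ hζ
          obtain ⟨a, rfl⟩ := hξg ζ
          by_cases ha : a ∈ maximalIdeal R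
          · exact hξm a ha
          · exfalso
            have hu : IsUnit a := by simpa using ha
            obtain ⟨b, hb⟩ := hu.exists_left_inv
            have h0 : (Ext.mk₀ p).comp ξ (zero_add _) = 0 := by
              rw [← one_smul R ξ, ← hb, mul_smul, Ext.comp_smul, hζ, smul_zero]
            obtain ⟨s, rfl⟩ := hξg η
            apply hr0
            rw [← bin_bfst_comp (c := c) (r • e1), ← hpe, Ext.comp_smul, h0, smul_zero,
              Ext.comp_zero]
        have hext : ∀ i, EVan M (i+1) → EVan M' (i+1) := by
          intro i hi e
          have hz : hS.extClass.comp e (add_comm 1 (i+1)) = 0 := by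
            by_cases hij : i + 1 = j
            · subst hij
              apply hpinj
              exact hS.comp_extClass_assoc e _
            · exact hZ.van (i+1) (by lia) _
          obtain ⟨x2, hx2⟩ := Ext.contravariant_sequence_exact₁ hS _ e (add_comm 1 (i+1)) hz
          rw [← hx2, evan_B c hi x2, Ext.comp_zero]
        let ρ := Ext.precompOfLinear (Ext.mk₀ (ι ≫ bfst M c)) R (RR R) (zero_add (j+1))
        have hρ : ∀ e, ρ e = (Ext.mk₀ (ι ≫ bfst M c)).comp e (zero_add _) := fun e => rfl
        have hρs : Function.Surjective ρ := by
          intro e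
          obtain ⟨x2, hx2⟩ := Ext.contravariant_sequence_exact₁ hS _ e (add_comm 1 (j+1))
            (hZ.van (j+1) (by lia) _)
          refine ⟨(Ext.mk₀ (bin M c)).comp x2 (zero_add _), ?_⟩
          rw [hρ, ← Ext.mk₀_comp_mk₀_assoc, ← hx2]
          congr 1
          apply bin_inj
          rw [bin_bfst_comp]
        have hρe : ρ (r • e1) = 0 := by
          rw [hρ, ← Ext.mk₀_comp_mk₀_assoc, ← hpe, Ext.mk₀_comp_mk₀_assoc, w, Ext.mk₀_zero,
            Ext.zero_comp]
        have hM' : M' ∈ 𝒳 := by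
          refine ihK (LinearMap.ker (ρ ∘ₗ π)) ?_ M' (ρ ∘ₗ π) (hρs.comp hπ) rfl
            (nice_X1 hS (nice_B c hM) hZ.nice) (fun i hi => hext i (h1 i hi))
            (fun i hi => hext i (h2 i hi))
          rw [← hK]
          obtain ⟨e0, he0⟩ := hπ (r • e1)
          refine lt_of_le_of_ne (LinearMap.ker_le_ker_comp _ _) fun heq => hr0 ?_
          have : e0 ∈ LinearMap.ker (ρ ∘ₗ π) := by
            rw [LinearMap.mem_ker, LinearMap.comp_apply, he0, hρe]
          rw [← heq, LinearMap.mem_ker, he0] at this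
          exact this
        exact hX.summand_closed M (Fr R c) (hX.ext_closed _ _ _ _ _ (isSES_of hS) hM' hZX)
    exact key _ M0 LinearMap.id Function.surjective_id rfl hM0 h01 h02

lemma exists_Z_step [IsNoetherianRing R] [IsLocalRing R] {𝒳 : Set (ModuleCat.{u} R)}
    (hX : IsResolving R 𝒳) (j : ℕ) (Y : ModuleCat.{u} R) (hYX : Y ∈ 𝒳) (hY : Nice Y)
    (hT : Top (j+1) Y) (hprev : ∀ i < j, ∃ Z, IsZ (i+1) Z ∧ Z ∈ 𝒳) :
    ∃ Z, IsZ (j+1) Z ∧ Z ∈ 𝒳 := by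
  obtain ⟨Z, hZ, -⟩ := exists_Z (depth_lemma hT) j le_rfl
  refine ⟨Z, hZ, ?_⟩
  obtain ⟨ξ, hξ0, hξm, hξg⟩ := hZ.gen
  have hT' : Top (0 + 1 + j) Y := by
    have e : 0 + 1 + j = j + 1 := by lia
    rw [e]; exact hT
  obtain ⟨W, hKW, hW⟩ := hT'.sy j
  obtain ⟨c1, c0, f, g, w, v, p, hS, hvp, hvm⟩ := top_one hW
  have h0 : (ξ.comp (Ext.mk₀ v) (add_zero _)).comp (Ext.mk₀ f) (add_zero _) = 0 := by
    rw [Ext.comp_assoc_of_third_deg_zero, Ext.mk₀_comp_mk₀]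
    exact comp_coord_zero (maximalIdeal R) ξ hξm _ hvm
  obtain ⟨e1, he1⟩ := Ext.covariant_sequence_exact₁ _ hS _ h0 rfl
  obtain ⟨θ, hθ⟩ := sy_lift j hKW
  obtain ⟨e2, he2⟩ := hθ Z 0 j (by lia) (fun i h1 h2 => by
    obtain ⟨i, rfl⟩ : ∃ k, i = k + 1 := ⟨i - 1, by lia⟩
    exact hZ.van i (by lia)) e1
  obtain ⟨f0, rfl⟩ := (Ext.mk₀_bijective _ _).2 e2
  let τ : Ext Y (RR R) (j+1) := (θ.comp hS.extClass rfl).comp (Ext.mk₀ p) (add_zero _)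
  have hτ : (Ext.mk₀ f0).comp τ (zero_add _) = ξ := by
    have h1 : ξ = (ξ.comp (Ext.mk₀ v) (add_zero _)).comp (Ext.mk₀ p) (add_zero _) := by
      rw [Ext.comp_assoc_of_third_deg_zero, Ext.mk₀_comp_mk₀, hvp, Ext.comp_mk₀_id]
    rw [h1, ← he1, ← he2]
    simp only [τ]
    rw [← Ext.comp_assoc_of_third_deg_zero (Ext.mk₀ f0) (θ.comp hS.extClass rfl) (Ext.mk₀ p)
      (zero_add (j+1)), Ext.comp_assoc (Ext.mk₀ f0) θ hS.extClass (zero_add j) rfl (by lia)]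
  obtain ⟨c, q, hq, hqf⟩ := surjectify f0 hY.fg
  obtain ⟨X, ι, w', hS'⟩ := exists_ker q hq
  have hvX : ∀ i, j ≤ i → EVan X (i+1) := by
    intro i hi e
    obtain ⟨x2, hx2⟩ := Ext.contravariant_sequence_exact₁ hS' _ e (add_comm 1 (i+1))
      (hT.van _ (by lia) _)
    by_cases hij : i = j
    · subst hij
      obtain ⟨r, hr⟩ := hξg ((Ext.mk₀ (bin Z c)).comp x2 (zero_add _))
      have : x2 = (Ext.mk₀ q).comp (r • τ) (zero_add _) := by
        apply bin_inj
        rw [hr, Ext.mk₀_comp_mk₀_assoc, hqf, Ext.comp_smul, hτ]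
      rw [← hx2, this]
      change (Ext.mk₀ ι).comp _ _ = 0
      rw [Ext.mk₀_comp_mk₀_assoc, w', Ext.mk₀_zero, Ext.zero_comp]
    · rw [← hx2, evan_B c (hZ.van i (by lia)) x2, Ext.comp_zero]
  have hXX : X ∈ 𝒳 := filt hX j hprev j 0 (zero_add j) X (nice_X1 hS' (nice_B c hZ.nice) hY)
    (fun i hi => absurd hi (by lia)) hvX
  exact hX.summand_closed Z (Fr R c) (hX.ext_closed _ _ _ _ _ (isSES_of hS') hXX hYX)

lemma nice_Fr [IsLocalRing R] (c : ℕ) : Nice (Fr R c) :=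
  ⟨finFr c, FP.proj _, fun x _ => Ideal.le_radical (by
    have := (Kill (Fr R c)).mul_mem_left x (one_mem_Kill (Fr R c))
    rwa [mul_one] at this)⟩

lemma exists_Z_mem [IsNoetherianRing R] [IsLocalRing R] {𝒳 : Set (ModuleCat.{u} R)}
    (hX : IsResolving R 𝒳) (j : ℕ) : ∀ Y : ModuleCat.{u} R, Y ∈ 𝒳 → Nice Y → Top (j+1) Y →
    ∀ i < j + 1, ∃ Z, IsZ (i+1) Z ∧ Z ∈ 𝒳 := by
  induction j with
  | zero =>
    intro Y hYX hY hT i hi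
    obtain rfl : i = 0 := by lia
    exact exists_Z_step hX 0 Y hYX hY hT (fun i hi => absurd hi (by lia))
  | succ j ih =>
    intro Y hYX hY hT
    obtain ⟨c, g, hg⟩ := exists_cover Y hY.fg
    obtain ⟨K, f, w, hS⟩ := exists_ker g hg
    have hprev := ih K (hX.syzygy_closed _ _ _ _ _ (isSES_of hS) (finite_X1 hS (finFr c)) (finFr c)
      (inferInstanceAs (Module.Projective R (Fin c → R))) hYX)
      (nice_X1 hS (nice_Fr c) hY) (Top.syz hS (finFr c) hT)
    intro i hi
    rcases Nat.lt_succ_iff_lt_or_eq.1 hi with h | rfl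
    · exact hprev i h
    · exact exists_Z_step hX (j+1) Y hYX hY hT hprev

end Aux4

section Aux5

open CategoryTheory.Abelian IsLocalRing

variable {R : Type u} [CommRing R]

lemma push_construction {K F N : ModuleCat.{u} R} (ι : K ⟶ F) (π : F ⟶ N) (w : ι ≫ π = 0)
    (hS : (ShortComplex.mk ι π w).ShortExact) (x : R) :
    ∃ (N' : ModuleCat.{u} R) (α : K ⟶ N') (β : N' ⟶ N) (w' : α ≫ β = 0) (b : F ⟶ N')
      (a : N' ⟶ F), (ShortComplex.mk α β w').ShortExact ∧ ι ≫ b = (x • 𝟙 K) ≫ α ∧ b ≫ β = π ∧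
      a ≫ b = x • 𝟙 N' := by
  let r : K →ₗ[R] (F × K) := LinearMap.prod ι.hom (-(x • LinearMap.id))
  obtain ⟨hi, hs, hr⟩ := isSES_of hS
  simp only at hi hs hr
  have hπι : ∀ z, π.hom (ι.hom z) = 0 := fun z => by
    have : ι.hom z ∈ LinearMap.ker π.hom := hr ▸ LinearMap.mem_range_self _ _
    simpa using this
  let α : K →ₗ[R] ((F × K) ⧸ LinearMap.range r) := (LinearMap.range r).mkQ ∘ₗ LinearMap.inr R F K
  let b : F →ₗ[R] ((F × K) ⧸ LinearMap.range r) := (LinearMap.range r).mkQ ∘ₗ LinearMap.inl R F K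
  let β : ((F × K) ⧸ LinearMap.range r) →ₗ[R] N :=
    (LinearMap.range r).liftQ (π.hom ∘ₗ LinearMap.fst R F K) (by
      rintro _ ⟨z, rfl⟩
      simpa [r] using hπι z)
  let a : ((F × K) ⧸ LinearMap.range r) →ₗ[R] F :=
    (LinearMap.range r).liftQ (LinearMap.coprod (x • LinearMap.id) ι.hom) (by
      rintro _ ⟨z, rfl⟩
      simp [r])
  have hrel : ∀ z : K, (LinearMap.range r).mkQ (ι.hom z, 0) = (LinearMap.range r).mkQ (0, x • z) := by
    intro z
    rw [← sub_eq_zero, ← map_sub, Submodule.mkQ_apply, Submodule.Quotient.mk_eq_zero]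
    exact ⟨z, by simp [r]⟩
  obtain ⟨w', hS'⟩ := ses_mk (ModuleCat.ofHom α) (ModuleCat.ofHom β : ModuleCat.of R _ ⟶ N) (by
      rw [injective_iff_map_eq_zero]
      intro z hz
      have hz' : (LinearMap.range r).mkQ (0, z) = 0 := hz
      rw [Submodule.mkQ_apply, Submodule.Quotient.mk_eq_zero] at hz'
      obtain ⟨y, hy⟩ := hz'
      have h1 : ι.hom y = 0 := congrArg Prod.fst hy
      have h2 : -(x • y) = z := congrArg Prod.snd hy
      have : y = 0 := hi (by rw [h1, map_zero])
      rw [← h2, this, smul_zero, neg_zero]) (by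
      intro y
      obtain ⟨f, rfl⟩ := hs y
      exact ⟨(LinearMap.range r).mkQ (f, 0), by simp [β]⟩) (by
      ext t
      obtain ⟨⟨f, z⟩, rfl⟩ := Submodule.mkQ_surjective _ t
      constructor
      · rintro ⟨y, hy⟩
        rw [← hy]
        simp [α, β]
      · intro h
        have h' : π.hom f = 0 := by simpa [β] using h
        have : f ∈ LinearMap.range ι.hom := hr ▸ h'
        obtain ⟨y, rfl⟩ := this
        refine ⟨x • y + z, ?_⟩
        change (LinearMap.range r).mkQ (0, x • y + z) = _
        have e1 : ((0 : F), x • y + z) = (0, x • y) + (0, z) := by simp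
        have e2 : (ι.hom y, z) = (ι.hom y, 0) + (0, z) := by simp
        rw [e1, e2, map_add, map_add, hrel])
  refine ⟨_, ModuleCat.ofHom α, ModuleCat.ofHom β, w', ModuleCat.ofHom b, ModuleCat.ofHom a, hS',
    ?_, ?_, ?_⟩
  · ext z
    exact hrel z
  · ext f
    simp [b, β]
  · apply ModuleCat.hom_ext
    apply LinearMap.ext
    intro t
    obtain ⟨⟨f, z⟩, rfl⟩ := Submodule.mkQ_surjective _ t
    change (LinearMap.range r).mkQ (x • f + ι.hom z, 0) = x • (LinearMap.range r).mkQ (f, z)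
    have e1 : (x • f + ι.hom z, (0 : K)) = (x • f, 0) + (ι.hom z, 0) := by simp
    rw [e1, map_add, hrel, ← map_add, ← map_smul]
    simp

lemma NX [IsNoetherianRing R] [IsLocalRing R] {𝒳 : Set (ModuleCat.{u} R)}
    (hX : IsResolving R 𝒳) {n : ℕ} (N : ModuleCat.{u} R) (hNX : N ∈ 𝒳) (hN : Top (n+1) N) (x : R)
    (hx : x ∈ maximalIdeal R) : ∃ N' ∈ 𝒳, Top (n+1) N' ∧ x ∈ Kill N' ∧
      ∀ y ∈ Kill N, y * y ∈ Kill N' := by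
  obtain ⟨c, π, hπ⟩ := exists_cover N hN.fg
  obtain ⟨K, ι, w, hS⟩ := exists_ker π hπ
  obtain ⟨N', α, β, w', b, a, hS', h1, h2, h3⟩ := push_construction ι π w hS x
  have hKX : K ∈ 𝒳 := hX.syzygy_closed _ _ _ _ _ (isSES_of hS) (finite_X1 hS (finFr c)) (finFr c)
      (inferInstanceAs (Module.Projective R (Fin c → R))) hNX
  have hKfp : FP K := FP.X1 hS (FP.proj _) hN.fp
  have hN'X : N' ∈ 𝒳 := hX.ext_closed _ _ _ _ _ (isSES_of hS') hKX hNX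
  have hcl : x • hS.extClass = hS'.extClass := by
    let φ : ShortComplex.mk ι π w ⟶ ShortComplex.mk α β w' :=
      { τ₁ := x • 𝟙 K, τ₂ := b, τ₃ := 𝟙 N, comm₁₂ := h1.symm, comm₂₃ := by simpa using h2 }
    have := ShortComplex.ShortExact.extClass_naturality hS hS' φ
    simp only [φ] at this
    rw [Ext.mk₀_id_comp, Ext.mk₀_smul, Ext.comp_smul, Ext.comp_mk₀_id] at this
    exact this
  refine ⟨N', hN'X, ⟨hX.fg _ hN'X, FP.X2 hS' hKfp hN.fp, ?_, ?_⟩,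
    kill_of_factor a b x h3, ?_⟩
  · intro hv
    apply hN.ne
    have := hN.fg
    have htop : (⊤ : Submodule R (Ext N (RR R) (n+1))) = ⊥ := by
      refine Submodule.eq_bot_of_le_smul_of_le_jacobson_bot (maximalIdeal R) _
        (Module.Finite.fg_top) ?_ (IsLocalRing.maximalIdeal_le_jacobson _)
      intro e _
      obtain ⟨x1, hx1⟩ := Ext.contravariant_sequence_exact₃ hS' _ e (hv _) (add_comm 1 n)
      rw [← hx1, ← hcl, Ext.smul_comp]
      exact Submodule.smul_mem_smul hx Submodule.mem_top
    intro e
    have : e ∈ (⊤ : Submodule R (Ext N (RR R) (n+1))) := Submodule.mem_top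
    rw [htop] at this
    simpa using this
  · intro i hi e
    obtain ⟨i, rfl⟩ : ∃ k, i = k + 1 := ⟨i - 1, by lia⟩
    obtain ⟨x3, hx3⟩ := Ext.contravariant_sequence_exact₂ hS' _ e
      ((evan_shift hS i).2 (hN.van _ (by lia)) _)
    rw [← hx3, hN.van _ hi x3, Ext.comp_zero]
  · intro y hy
    have hyK := kill_X1 hS (one_mem_Kill (Fr R c)) hy
    rw [one_mul] at hyK
    exact kill_X2 hS' hyK hy

lemma exists_nice [IsNoetherianRing R] [IsLocalRing R] {𝒳 : Set (ModuleCat.{u} R)}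
    (hX : IsResolving R 𝒳) {n : ℕ} (N : ModuleCat.{u} R) (hNX : N ∈ 𝒳) (hN : Top (n+1) N) :
    ∃ Y ∈ 𝒳, Top (n+1) Y ∧ Nice Y := by
  classical
  obtain ⟨t, ht⟩ := IsNoetherian.noetherian (maximalIdeal R)
  have key : ∀ s : Finset R, (∀ x ∈ s, x ∈ maximalIdeal R) →
      ∃ Y ∈ 𝒳, Top (n+1) Y ∧ ∀ x ∈ s, x ∈ (Kill Y).radical := by
    intro s
    induction s using Finset.induction_on with
    | empty => intro _; exact ⟨N, hNX, hN, by simp⟩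
    | insert x s _ ih =>
      intro hs
      obtain ⟨Y, hY, hT, hk⟩ := ih (fun y hy => hs y (Finset.mem_insert_of_mem hy))
      obtain ⟨Y', hY', hT', hx', hk'⟩ := NX hX Y hY hT x (hs x (Finset.mem_insert_self _ _))
      refine ⟨Y', hY', hT', fun y hy => ?_⟩
      rcases Finset.mem_insert.1 hy with rfl | hy
      · exact Ideal.le_radical hx'
      · obtain ⟨k, hk⟩ := hk y hy
        exact ⟨k + k, by rw [pow_add]; exact hk' _ hk⟩
  obtain ⟨Y, hY, hT, hk⟩ := key t (fun x hx => ht ▸ Submodule.subset_span hx)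
  refine ⟨Y, hY, hT, hT.fg, hT.fp, ?_⟩
  conv_lhs => rw [← ht]
  exact Submodule.span_le.2 hk

end Aux5

section Aux6

open CategoryTheory.Abelian IsLocalRing

variable {R : Type u} [CommRing R]

lemma nonfree_kill [IsNoetherianRing R] (M : ModuleCat.{u} R) (hM : Module.Finite R M)
    (p : PrimeSpectrum R)
    (hp : Module.Free (Localization.AtPrime p.asIdeal) (LocalizedModule p.asIdeal.primeCompl M)) :
    ∃ u ∈ Kill M, u ∉ p.asIdeal := by
  obtain ⟨c, g, hg⟩ := exists_cover M hM
  let S := p.asIdeal.primeCompl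
  let gp := LocalizedModule.map S g.hom
  have hgp : Function.Surjective gp := LocalizedModule.map_surjective S g.hom hg
  have hpp : Module.Projective (Localization S) (LocalizedModule S M) :=
    @Module.Projective.of_free _ _ _ _ _ hp
  obtain ⟨σ, hσ⟩ := Module.projective_lifting_property gp LinearMap.id hgp
  have : Module.FinitePresentation R M := Module.finitePresentation_of_finite R M
  obtain ⟨h, s, hs⟩ := Module.FinitePresentation.exists_lift_of_isLocalizedModule S
    (LocalizedModule.mkLinearMap S (Fin c → R))
    ((σ.restrictScalars R) ∘ₗ LocalizedModule.mkLinearMap S M)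
  have hcomp : (LocalizedModule.mkLinearMap S M) ∘ₗ (g.hom ∘ₗ h) =
      (LocalizedModule.mkLinearMap S M) ∘ₗ ((s : R) • LinearMap.id) := by
    ext z
    have h1 := congrArg (fun t => gp (t z)) hs
    have h2 : gp (LocalizedModule.mkLinearMap S (Fin c → R) (h z)) =
        LocalizedModule.mkLinearMap S M (g.hom (h z)) := by
      simp [gp, LocalizedModule.mkLinearMap_apply, LocalizedModule.map_mk]
    have h3 : gp (σ (LocalizedModule.mkLinearMap S M z)) = LocalizedModule.mkLinearMap S M z :=
      LinearMap.congr_fun hσ _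
    have h4 : gp ((s : R) • σ (LocalizedModule.mkLinearMap S M z)) =
        (s : R) • gp (σ (LocalizedModule.mkLinearMap S M z)) :=
      (gp.restrictScalars R).map_smul _ _
    change LocalizedModule.mkLinearMap S M (g.hom (h z)) =
      LocalizedModule.mkLinearMap S M ((s : R) • z)
    rw [← h2, map_smul, ← h3, ← h4]
    exact h1
  obtain ⟨t, ht⟩ := Module.Finite.exists_smul_of_comp_eq_of_isLocalizedModule S
    (LocalizedModule.mkLinearMap S M) _ _ hcomp
  refine ⟨(t : R) * s, ?_, (t * s).2⟩
  refine kill_of_factor (ModuleCat.ofHom ((t : R) • h)) g _ ?_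
  apply ModuleCat.hom_ext
  ext z
  have := congrArg (fun t => t z) ht
  change g.hom ((t : R) • h z) = ((t : R) * (s : R)) • z
  rw [map_smul, mul_smul]
  exact this

lemma nice_of_free [IsNoetherianRing R] [IsLocalRing R] (M : ModuleCat.{u} R)
    (hM : Module.Finite R M) (hfp : FP M)
    (hMfree : ∀ p : PrimeSpectrum R, p.asIdeal ≠ IsLocalRing.maximalIdeal R →
      Module.Free (Localization.AtPrime p.asIdeal) (LocalizedModule p.asIdeal.primeCompl M)) :
    Nice M := by
  refine ⟨hM, hfp, ?_⟩
  rw [Ideal.radical_eq_sInf]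
  refine le_sInf ?_
  rintro p ⟨hle, hp⟩
  by_contra hcon
  obtain ⟨u, hu, hup⟩ := nonfree_kill M hM ⟨p, hp⟩ (hMfree ⟨p, hp⟩ (fun h => hcon h.ge))
  exact hup (hle hu)

lemma fp_of_pdLE (n : ℕ) (M : ModuleCat.{u} R) (h : pdLE R n M) :
    HasProjectiveDimensionLT M (n+1) := by
  induction n generalizing M with
  | zero =>
    have : Module.Projective R M := h
    have : Projective M := (IsProjective.iff_projective (R := R) (P := M)).1 this
    infer_instance
  | succ n ih =>
    obtain ⟨K, P, f, g, hP, hPp, ⟨hi, hs, hr⟩, hK⟩ := h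
    obtain ⟨w, hS⟩ := ses_mk (ModuleCat.ofHom f) (ModuleCat.ofHom g) hi hs hr
    have : Projective P := (IsProjective.iff_projective (R := R) (P := P)).1 hPp
    exact hS.hasProjectiveDimensionLT_X₃ (n+1) (ih K hK)
      (hasProjectiveDimensionLT_of_ge _ 1 _ (by lia))

lemma pdLE_of_van [IsNoetherianRing R] (n : ℕ) (N : ModuleCat.{u} R) (hN : Module.Finite R N)
    (hfp : FP N) (hv : ∀ i, n ≤ i → EVan N (i+1)) : pdLE R n N := by
  induction n generalizing N with
  | zero => exact projective_of_evan N hN hfp (fun i => hv i (by lia))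
  | succ n ih =>
    obtain ⟨c, g, hg⟩ := exists_cover N hN
    obtain ⟨K, f, w, hS⟩ := exists_ker g hg
    exact ⟨K, Fr R c, f.hom, g.hom, finFr c, inferInstanceAs (Module.Projective R (Fin c → R)),
      isSES_of hS, ih K (finite_X1 hS (finFr c)) (FP.X1 hS (FP.proj _) hfp)
        (fun i hi => (evan_shift hS i).2 (hv (i+1) (by lia)))⟩

lemma van_of_pdim_le (n : ℕ) (M : ModuleCat.{u} R) (h : pdim R M ≤ ((n : ℕ∞) : WithBot ℕ∞)) :
    ∀ i, n ≤ i → EVan M (i+1) := by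
  have hlt : pdim R M < (((n + 1 : ℕ) : ℕ∞) : WithBot ℕ∞) :=
    lt_of_le_of_lt h (by exact_mod_cast Nat.lt_succ_self n)
  obtain ⟨x, hx, hxn⟩ := sInf_lt_iff.1 hlt
  intro i hi e
  rcases hx with ⟨-, hsub⟩ | ⟨m, rfl, hm⟩
  · have : Projective M := (IsProjective.iff_projective (R := R) (P := M)).1
      (@Module.Projective.of_free _ _ _ _ _ (Module.Free.of_subsingleton R M))
    exact Ext.eq_zero_of_projective e
  · have hmn : m < n + 1 := by exact_mod_cast hxn
    have := fp_of_pdLE m M hm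
    exact e.eq_zero_of_hasProjectiveDimensionLT (m+1) (by lia)

lemma pdim_le_of (n : ℕ) (N : ModuleCat.{u} R) (h : pdLE R n N) :
    pdim R N ≤ ((n : ℕ∞) : WithBot ℕ∞) := sInf_le (Or.inr ⟨n, rfl, h⟩)

lemma main_aux [IsNoetherianRing R] [IsLocalRing R]
    (M N : ModuleCat.{u} R) (hMfg : Module.Finite R M) (hNfg : Module.Finite R N)
    (hMfree : ∀ p : PrimeSpectrum R, p.asIdeal ≠ IsLocalRing.maximalIdeal R →
      Module.Free (Localization.AtPrime p.asIdeal) (LocalizedModule p.asIdeal.primeCompl M))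
    (hMpd : ∃ n : ℕ, pdLE R n M) (hNpd : ∃ n : ℕ, pdLE R n N)
    (hle : pdim R M ≤ pdim R N) :
    M ∈ resClosure R {N} := by
  classical
  rintro 𝒳 ⟨hX, hNX⟩
  have hNX : N ∈ 𝒳 := hNX rfl
  obtain ⟨a, ha⟩ := hMpd
  obtain ⟨b, hb⟩ := hNpd
  have hMfp : FP M := ⟨_, fp_of_pdLE a M ha⟩
  have hNd := fp_of_pdLE b N hb
  have hNfp : FP N := ⟨_, hNd⟩
  have hex : ∃ n, ∀ i, n ≤ i → EVan N (i+1) :=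
    ⟨b, fun i hi e => e.eq_zero_of_hasProjectiveDimensionLT (b+1) (by lia)⟩
  have hn := Nat.find_spec hex
  have hmin := fun k => Nat.find_min hex (m := k)
  generalize Nat.find hex = n at hn hmin
  have hMv := van_of_pdim_le n M (hle.trans (pdim_le_of n N (pdLE_of_van n N hNfg hNfp hn)))
  rcases n with _ | n
  · exact hX.proj_mem M hMfg (projective_of_evan M hMfg hMfp fun i => hMv i (by lia))
  · have hT : Top (n+1) N := by
      refine ⟨hNfg, hNfp, fun h => hmin n (by lia) fun i hi => ?_, fun i hi => ?_⟩
      · rcases hi.eq_or_lt with rfl | h'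
        · exact h
        · exact hn i h'
      · obtain ⟨i, rfl⟩ : ∃ k, i = k + 1 := ⟨i - 1, by lia⟩
        exact hn i (by lia)
    obtain ⟨Y, hY, hYT, hYn⟩ := exists_nice hX N hNX hT
    exact filt hX (n+1) (exists_Z_mem hX n Y hY hYn hYT) (n+1) 0 (zero_add _) M
      (nice_of_free M hMfg hMfp hMfree) (fun i hi => absurd hi (by lia)) hMv

end Aux6

/-- Proposition: over a noetherian local ring, if `M ∈ PD_0(R)`, `N` has finite
projective dimension and `pd M ≤ pd N`, then `M ∈ res N`. -/
theorem mem_resClosure_of_pd_le [IsNoetherianRing R] [IsLocalRing R]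
    (M N : ModuleCat.{u} R) (hMfg : Module.Finite R M) (hNfg : Module.Finite R N)
    (hMfree : ∀ p : PrimeSpectrum R, p.asIdeal ≠ IsLocalRing.maximalIdeal R →
      Module.Free (Localization.AtPrime p.asIdeal) (LocalizedModule p.asIdeal.primeCompl M))
    (hMpd : ∃ n : ℕ, pdLE R n M) (hNpd : ∃ n : ℕ, pdLE R n N)
    (hle : pdim R M ≤ pdim R N) :
    M ∈ resClosure R {N} := by
  exact main_aux M N hMfg hNfg hMfree hMpd hNpd hle

end ResolvPaper
end
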